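/- Let q ≥ 3 be odd. There is a constant C > 0 depending only on q such that the following holds for all n ≥ 2: let H_1,…,H_k be q-uniform matchings on [n] whose disjoint union H is t-approximately strongly regular with co-degree values d_1 ≥ d_2 ≥ ⋯ ≥ d_q (d_r := d_{H,r}), and suppose k ≥ d_1 ≥ n^{1−2/q}·log n. Then E_{b}[val(Ψ_b)²] ≤ 2|H|²/d_t + C·|H|·n·√(k·n^{1−2/q})·log n, where b is uniform on {±1}^k. -/

import Mathlib

open Finset

/-- An index `t ∈ {1,…,q}` is good with respect to the co-degree sequence
`d 1 ≥ ⋯ ≥ d q` (on `n` vertices) if: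
(1) `d r / d t ≤ n^{1−2r/q}` for `1 ≤ r ≤ ⌈(q−t)/2⌉`;
(2) `d r / d t ≤ n^{−(2/q)(r−t)+(1/q)(t−[t even])}` for `t ≤ r ≤ ⌊(q+t)/2⌋`;
(3) `d t ≥ d 1 · n^{−(2/q)(t−1)}` if `t < q/2`, and `d t ≥ d 1 · n^{−1+2/q}`
if `t > q/2`. -/
def GoodIndex (n q : ℕ) (d : ℕ → ℝ) (t : ℕ) : Prop :=
  (∀ r : ℕ, 1 ≤ r → r ≤ (q - t + 1) / 2 →
      d r / d t ≤ (n : ℝ) ^ ((1 : ℝ) - 2 * (r : ℝ) / (q : ℝ))) ∧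
  (∀ r : ℕ, t ≤ r → r ≤ (q + t) / 2 →
      d r / d t ≤ (n : ℝ) ^ (-(2 / (q : ℝ)) * ((r : ℝ) - (t : ℝ)) +
        (1 / (q : ℝ)) * ((t : ℝ) - if Even t then 1 else 0))) ∧
  (2 * t < q → d 1 * (n : ℝ) ^ (-(2 / (q : ℝ)) * ((t : ℝ) - 1)) ≤ d t) ∧
  (q < 2 * t → d 1 * (n : ℝ) ^ (-1 + 2 / (q : ℝ)) ≤ d t)

/-- Co-degree of a set `Q` in a hypergraph given as a multiset of hyperedges:
the number of hyperedges (with multiplicity) containing `Q`. -/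
def mCodeg {n : ℕ} (H : Multiset (Finset (Fin n))) (Q : Finset (Fin n)) : ℕ :=
  (H.filter (fun C => Q ⊆ C)).card

/-- `d_{H,r}`: maximum co-degree over all `r`-element subsets of `[n]`. -/
def mMaxCodeg {n : ℕ} (H : Multiset (Finset (Fin n))) (r : ℕ) : ℕ :=
  (Finset.univ.filter (fun Q : Finset (Fin n) => Q.card = r)).sup (mCodeg H)

/-- `t`-approximate strong regularity: `H` can be partitioned into pieces
`Hs θ`, each consisting of hyperedges containing a fixed `t`-element set `Qs θ`,
each of size between `d_{H,t}/2` and `d_{H,t}`, and `t` is a good index for the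
co-degree sequence of `H`. -/
def mASR {n : ℕ} (q t : ℕ) (H : Multiset (Finset (Fin n))) : Prop :=
  ∃ (p : ℕ) (Hs : Fin p → Multiset (Finset (Fin n))) (Qs : Fin p → Finset (Fin n)),
    H = ∑ θ : Fin p, Hs θ ∧
    (∀ θ, (Qs θ).card = t ∧ ∀ C ∈ Hs θ, Qs θ ⊆ C) ∧
    (∀ θ, (mMaxCodeg H t : ℝ) / 2 ≤ ((Hs θ).card : ℝ) ∧
      ((Hs θ).card : ℝ) ≤ (mMaxCodeg H t : ℝ)) ∧
    GoodIndex n q (fun r => (mMaxCodeg H r : ℝ)) t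

/-!
By Cauchy–Schwarz over the classes of hyperedges with a common center `Q θ`, the square of `Ψ_b(x)`
is at most `p` times `|H|` plus a sum over pairs of hyperedges with the same center. The center
cancels in the monomial of a pair, leaving the product of the two tails, of even degree
`2 (q - t)`, with coefficient `b i * b i'`. After decoupling, the pair sum is linear in independent
signs for each fixed `x`. Splitting the variables so that each side takes half of each of the two
tails turns it into the quadratic form of a Kikuchi matrix indexed by tuples of words of length
`m ≈ n ^ (1 - 2 / q)`. The trace method bounds the expected norm of this matrix once its edges are
reweighted so that no vertex has large total weight. The good-index conditions are what makes the
pairs of any one color agree on few positions, so that this reweighting loses only a constant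
factor.
-/

open scoped BigOperators

/-! ### Averages over the cube -/

section Cube

variable {ι : Type*}

lemma intUnit_mul_self (u : ℤˣ) : (u : ℝ) * u = 1 := by
  norm_cast
  simp

lemma expect_pow_le_expect_pow {α : Type*} [Fintype α] [Nonempty α] (f : α → ℝ) {N : ℕ}
    (hN : Even N) : (𝔼 a, f a) ^ N ≤ 𝔼 a, f a ^ N := by
  simpa [Fintype.expect_eq_sum_div_card, sum_div, div_eq_inv_mul, mul_sum] using
    Real.pow_arith_mean_le_arith_mean_pow_of_even univ (fun _ : α ↦ (Fintype.card α : ℝ)⁻¹) f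
      (fun _ _ ↦ by positivity) (by simp) hN

variable [DecidableEq ι]

lemma expect_prod_intUnit_eq_zero [Fintype ι] {S : Finset ι} (hS : S.Nonempty) :
    𝔼 b : ι → ℤˣ, ∏ i ∈ S, (b i : ℝ) = 0 := by
  obtain ⟨i, hi⟩ := hS
  have hprod : ∑ b : ι → ℤˣ, ∏ j, (if j ∈ S then (b j : ℝ) else 1) = 0 := by
    rw [← Fintype.prod_sum fun j (u : ℤˣ) ↦ if j ∈ S then (u : ℝ) else 1]
    exact prod_eq_zero (mem_univ i) (by simp [hi])
  simp only [prod_ite_mem, univ_inter] at hprod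
  rw [Fintype.expect_eq_sum_div_card, hprod, zero_div]

lemma symmDiff_singleton_eq_ite (S : Finset ι) (i : ι) :
    symmDiff S {i} = if i ∈ S then S.erase i else insert i S := by
  ext j
  split_ifs <;> grind [mem_symmDiff]

lemma prod_symmDiff_singleton_intUnit (b : ι → ℤˣ) (S : Finset ι) (i : ι) :
    ∏ j ∈ symmDiff S {i}, (b j : ℝ) = b i * ∏ j ∈ S, (b j : ℝ) := by
  rw [symmDiff_singleton_eq_ite]
  split_ifs with hi
  · rw [← mul_prod_erase S _ hi, ← mul_assoc, intUnit_mul_self, one_mul]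
  · rw [prod_insert hi]

lemma card_symmDiff_singleton (S : Finset ι) (i : ι) :
    #(symmDiff S {i}) = if i ∈ S then #S - 1 else #S + 1 := by
  rw [symmDiff_singleton_eq_ite]
  split_ifs with hi
  · exact card_erase_of_mem hi
  · exact card_insert_of_notMem hi

end Cube

/-! ### The trace method for random signed sums of matrices -/

section Trace

open Matrix

variable {U : Type*} [Fintype U] [DecidableEq U] {ι : Type*} [Fintype ι] [DecidableEq ι]

lemma sum_mul_pow_card_symmDiff_le (w : ι → ℝ) {x ε : ℝ} (hx : 0 ≤ x) (hw : ∀ i, 0 ≤ w i)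
    (hw_sum : ∑ i, w i ≤ 1) (hwε : ∀ i, w i ≤ ε) (S : Finset ι) (hS : #S * ε ≤ x ^ 2) :
    ∑ i, w i * x ^ #(symmDiff S {i}) ≤ 2 * x ^ (#S + 1) := by
  have hmem : ∑ i ∈ S, w i * x ^ #(symmDiff S {i}) ≤ x ^ (#S + 1) := by
    rcases S.eq_empty_or_nonempty with rfl | hne
    · simpa using hx
    obtain ⟨c, hc⟩ := Nat.exists_eq_add_one.2 hne.card_pos
    calc ∑ i ∈ S, w i * x ^ #(symmDiff S {i})
        ≤ ∑ _i ∈ S, ε * x ^ c := by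
          refine sum_le_sum fun i hi ↦ ?_
          rw [card_symmDiff_singleton, if_pos hi, hc, Nat.add_sub_cancel]
          exact mul_le_mul_of_nonneg_right (hwε i) (by positivity)
      _ = #S * ε * x ^ c := by rw [sum_const, nsmul_eq_mul, mul_assoc]
      _ ≤ x ^ 2 * x ^ c := mul_le_mul_of_nonneg_right hS (by positivity)
      _ = x ^ (#S + 1) := by rw [hc]; ring
  have hnotMem : ∑ i ∈ Sᶜ, w i * x ^ #(symmDiff S {i}) ≤ x ^ (#S + 1) :=
    calc ∑ i ∈ Sᶜ, w i * x ^ #(symmDiff S {i})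
        = (∑ i ∈ Sᶜ, w i) * x ^ (#S + 1) := by
          rw [sum_mul]
          refine sum_congr rfl fun i hi ↦ ?_
          rw [card_symmDiff_singleton, if_neg (mem_compl.1 hi)]
      _ ≤ 1 * x ^ (#S + 1) := by
          refine mul_le_mul_of_nonneg_right (le_trans ?_ hw_sum) (by positivity)
          exact sum_le_sum_of_subset_of_nonneg (subset_univ _) fun i _ _ ↦ hw i
      _ = x ^ (#S + 1) := one_mul _
  rw [← sum_add_sum_compl S]
  linarith

lemma expect_prod_mul_sum_smul_pow_succ (K : ι → Matrix U U ℝ) (N : ℕ) (S : Finset ι) (u w : U) :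
    𝔼 b : ι → ℤˣ, (∏ i ∈ S, (b i : ℝ)) * ((∑ i, (b i : ℝ) • K i) ^ (N + 1)) u w =
      ∑ i, ∑ v, K i u v * 𝔼 b : ι → ℤˣ,
        (∏ j ∈ symmDiff S {i}, (b j : ℝ)) * ((∑ i, (b i : ℝ) • K i) ^ N) v w := by
  simp_rw [mul_expect, ← expect_sum_comm, prod_symmDiff_singleton_intUnit]
  refine expect_congr rfl fun b _ ↦ ?_
  rw [pow_succ', mul_apply, mul_sum, sum_comm]
  refine sum_congr rfl fun v _ ↦ ?_
  rw [Matrix.sum_apply, sum_mul, mul_sum]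
  exact sum_congr rfl fun i _ ↦ by rw [Matrix.smul_apply, smul_eq_mul]; ring

/-- The condition `(N + #S) * ε ≤ x ^ 2` makes the `#S` ways of cancelling an index of `S` cost no
more than introducing a new one, which is why each factor of the product contributes `2 * x`. -/
lemma abs_expect_prod_mul_sum_smul_pow_le (K : ι → Matrix U U ℝ) {x ε : ℝ} (hx : 0 ≤ x)
    (hK : ∀ u, ∑ i, ∑ v, |K i u v| ≤ 1) (hKε : ∀ i u, ∑ v, |K i u v| ≤ ε) (N : ℕ) :
    ∀ (S : Finset ι) (u w : U), (N + #S) * ε ≤ x ^ 2 →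
      |𝔼 b : ι → ℤˣ, (∏ i ∈ S, (b i : ℝ)) * ((∑ i, (b i : ℝ) • K i) ^ N) u w| ≤
        x ^ #S * (2 * x) ^ N := by
  induction N with
  | zero =>
    intro S u w _
    rcases S.eq_empty_or_nonempty with rfl | hS
    · by_cases huw : u = w <;> simp [one_apply, huw]
    · simp_rw [pow_zero]
      rw [← expect_mul, expect_prod_intUnit_eq_zero hS, zero_mul, abs_zero]
      positivity
  | succ N ih =>
    intro S u w hS
    push_cast at hS
    have hterm (i : ι) (v : U) : |K i u v * 𝔼 b : ι → ℤˣ,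
        (∏ j ∈ symmDiff S {i}, (b j : ℝ)) * ((∑ i, (b i : ℝ) • K i) ^ N) v w| ≤
          |K i u v| * (x ^ #(symmDiff S {i}) * (2 * x) ^ N) := by
      rw [abs_mul]
      refine mul_le_mul_of_nonneg_left (ih _ v w (le_trans ?_ hS)) (abs_nonneg _)
      have hε : 0 ≤ ε := (sum_nonneg fun _ _ ↦ abs_nonneg _).trans (hKε i u)
      have hcard : (#(symmDiff S {i}) : ℝ) ≤ #S + 1 := by
        rw [card_symmDiff_singleton]
        exact_mod_cast (by split_ifs <;> omega)
      exact mul_le_mul_of_nonneg_right (by linarith) hε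
    have hε_S : #S * ε ≤ x ^ 2 := by
      rcases isEmpty_or_nonempty ι with hι | ⟨⟨i⟩⟩
      · simp [S.eq_empty_of_isEmpty, sq_nonneg]
      · have hε : 0 ≤ ε := (sum_nonneg fun _ _ ↦ abs_nonneg _).trans (hKε i u)
        nlinarith [mul_nonneg (Nat.cast_nonneg (α := ℝ) N) hε]
    rw [expect_prod_mul_sum_smul_pow_succ]
    calc _ ≤ ∑ i, ∑ v, |K i u v| * (x ^ #(symmDiff S {i}) * (2 * x) ^ N) :=
          (abs_sum_le_sum_abs _ _).trans <| sum_le_sum fun i _ ↦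
            (abs_sum_le_sum_abs _ _).trans <| sum_le_sum fun v _ ↦ hterm i v
      _ = (∑ i, (∑ v, |K i u v|) * x ^ #(symmDiff S {i})) * (2 * x) ^ N := by
          simp only [sum_mul, mul_assoc]
      _ ≤ 2 * x ^ (#S + 1) * (2 * x) ^ N :=
          mul_le_mul_of_nonneg_right (sum_mul_pow_card_symmDiff_le _ hx
            (fun i ↦ sum_nonneg fun _ _ ↦ abs_nonneg _) (hK u) (hKε · u) S hε_S) (by positivity)
      _ = x ^ #S * (2 * x) ^ (N + 1) := by ring

variable {g : U → ℝ} {A : Matrix U U ℝ}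

lemma dotProduct_mulVec_sq_le_trace (hg : ∀ u, 0 < g u) (hA : A.IsSymm) (z : U → ℝ) :
    (z ⬝ᵥ A *ᵥ z) ^ 2 ≤ (∑ u, g u * z u ^ 2) ^ 2 * ((diagonal g⁻¹ * A) ^ 2).trace := by
  have hquad : z ⬝ᵥ A *ᵥ z = ∑ p : U × U, z p.1 * A p.1 p.2 * z p.2 := by
    simp only [Fintype.sum_prod_type, dotProduct, mulVec, mul_sum, mul_assoc]
  have hnorm : (∑ u, g u * z u ^ 2) ^ 2 =
      ∑ p : U × U, g p.1 * g p.2 * (z p.1 ^ 2 * z p.2 ^ 2) := by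
    rw [Fintype.sum_prod_type, sq, sum_mul_sum]
    exact sum_congr rfl fun u _ ↦ sum_congr rfl fun v _ ↦ by ring
  have htrace : ((diagonal g⁻¹ * A) ^ 2).trace =
      ∑ p : U × U, (g p.1 * g p.2)⁻¹ * A p.1 p.2 ^ 2 := by
    simp only [Fintype.sum_prod_type, trace, diag_apply]
    refine sum_congr rfl fun u _ ↦ ?_
    rw [sq, mul_apply]
    refine sum_congr rfl fun v _ ↦ ?_
    rw [diagonal_mul, diagonal_mul, hA.apply u v, Pi.inv_apply, Pi.inv_apply, mul_inv]
    ring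
  rw [hquad, hnorm, htrace]
  refine sum_sq_le_sum_mul_sum_of_sq_le_mul _ (fun p _ ↦ ?_) (fun p _ ↦ ?_) (fun p _ ↦ ?_)
  · have := hg p.1; have := hg p.2; positivity
  · have := hg p.1; have := hg p.2; positivity
  · have := (hg p.1).ne'; have := (hg p.2).ne'
    exact le_of_eq (by field_simp)

lemma dotProduct_mulVec_sq_le (hg : ∀ u, 0 < g u) (hA : A.IsSymm) (z : U → ℝ) :
    (z ⬝ᵥ A *ᵥ z) ^ 2 ≤ (∑ u, g u * z u ^ 2) * (z ⬝ᵥ (A * diagonal g⁻¹ * A) *ᵥ z) := by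
  have hquad : z ⬝ᵥ (A * diagonal g⁻¹ * A) *ᵥ z = ∑ u, (g u)⁻¹ * (A *ᵥ z) u ^ 2 := by
    rw [← mulVec_mulVec, ← mulVec_mulVec, dotProduct_mulVec, ← mulVec_transpose, hA]
    simp only [dotProduct, mulVec_diagonal, Pi.inv_apply]
    exact sum_congr rfl fun u _ ↦ by ring
  rw [hquad]
  refine sum_sq_le_sum_mul_sum_of_sq_le_mul _ (fun u _ ↦ ?_) (fun u _ ↦ ?_) (fun u _ ↦ ?_)
  · have := hg u; positivity
  · have := hg u; positivity
  · have := (hg u).ne'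
    exact le_of_eq (by field_simp)

lemma dotProduct_mulVec_pow_le_trace (hg : ∀ u, 0 < g u) (z : U → ℝ) (M : ℕ) :
    ∀ {A : Matrix U U ℝ}, A.IsSymm → (z ⬝ᵥ A *ᵥ z) ^ 2 ^ (M + 1) ≤
      (∑ u, g u * z u ^ 2) ^ 2 ^ (M + 1) * ((diagonal g⁻¹ * A) ^ 2 ^ (M + 1)).trace := by
  induction M with
  | zero => exact fun hA ↦ dotProduct_mulVec_sq_le_trace hg hA z
  | succ M ih =>
    intro A hA
    set a := ∑ u, g u * z u ^ 2
    have ha : 0 ≤ a := sum_nonneg fun u _ ↦ mul_nonneg (hg u).le (sq_nonneg _)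
    have hsymm : (A * diagonal g⁻¹ * A).IsSymm := by
      rw [IsSymm, transpose_mul, transpose_mul, diagonal_transpose, hA, Matrix.mul_assoc]
    have hsq : diagonal g⁻¹ * (A * diagonal g⁻¹ * A) = (diagonal g⁻¹ * A) ^ 2 := by
      simp only [sq, Matrix.mul_assoc]
    calc (z ⬝ᵥ A *ᵥ z) ^ 2 ^ (M + 1 + 1)
        = ((z ⬝ᵥ A *ᵥ z) ^ 2) ^ 2 ^ (M + 1) := by rw [← pow_mul, ← pow_succ']
      _ ≤ (a * (z ⬝ᵥ (A * diagonal g⁻¹ * A) *ᵥ z)) ^ 2 ^ (M + 1) :=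
          pow_le_pow_left₀ (sq_nonneg _) (dotProduct_mulVec_sq_le hg hA z) _
      _ ≤ a ^ 2 ^ (M + 1) * (a ^ 2 ^ (M + 1) * ((diagonal g⁻¹ * A) ^ 2 ^ (M + 1 + 1)).trace) := by
          rw [mul_pow, pow_succ' 2 (M + 1), pow_mul _ 2, ← hsq]
          exact mul_le_mul_of_nonneg_left (ih hsymm) (by positivity)
      _ = a ^ 2 ^ (M + 1 + 1) * ((diagonal g⁻¹ * A) ^ 2 ^ (M + 1 + 1)).trace := by ring

lemma expect_trace_pow_le (A : ι → Matrix U U ℝ) {ε : ℝ} (hε : 0 ≤ ε) (hg : ∀ u, 0 < g u)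
    (hrow : ∀ u, ∑ i, ∑ v, |A i u v| ≤ g u) (hrowε : ∀ i u, ∑ v, |A i u v| ≤ ε * g u) (N : ℕ) :
    𝔼 b : ι → ℤˣ, ((diagonal g⁻¹ * ∑ i, (b i : ℝ) • A i) ^ N).trace ≤
      Fintype.card U * (2 * √(N * ε)) ^ N := by
  have habs (i : ι) (u : U) :
      ∑ v, |(diagonal g⁻¹ * A i) u v| = (g u)⁻¹ * ∑ v, |A i u v| := by
    rw [mul_sum]
    refine sum_congr rfl fun v _ ↦ ?_
    rw [diagonal_mul, abs_mul, Pi.inv_apply, abs_of_pos (inv_pos.2 (hg u))]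
  have hK (u : U) : ∑ i, ∑ v, |(diagonal g⁻¹ * A i) u v| ≤ 1 := by
    simp_rw [habs, ← mul_sum]
    exact (inv_mul_le_one₀ (hg u)).2 (hrow u)
  have hKε (i : ι) (u : U) : ∑ v, |(diagonal g⁻¹ * A i) u v| ≤ ε := by
    rw [habs, inv_mul_le_iff₀ (hg u), mul_comm]
    exact hrowε i u
  simp_rw [Matrix.mul_sum, Matrix.mul_smul, trace, diag_apply, expect_sum_comm]
  rw [← nsmul_eq_mul, ← card_univ]
  refine sum_le_card_nsmul _ _ _ fun u _ ↦ (le_abs_self _).trans ?_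
  have hx : (N + #(∅ : Finset ι)) * ε ≤ √(N * ε) ^ 2 := by
    rw [Real.sq_sqrt (by positivity), card_empty, Nat.cast_zero, add_zero]
  simpa using abs_expect_prod_mul_sum_smul_pow_le _ (Real.sqrt_nonneg _) hK hKε N ∅ u u hx

omit [DecidableEq U] in
/-- What is gained over the trivial bound `∑ u, g u` is governed by `ε`, the largest share of a row
that a single sign carries. -/
lemma expect_sum_dotProduct_mulVec_le (A : ι → Matrix U U ℝ) (hA : ∀ i, (A i).IsSymm)
    {ε : ℝ} (hε : 0 ≤ ε) (hg : ∀ u, 0 < g u)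
    (hrow : ∀ u, ∑ i, ∑ v, |A i u v| ≤ g u) (hrowε : ∀ i u, ∑ v, |A i u v| ≤ ε * g u)
    (z : (ι → ℤˣ) → U → ℤˣ) {L : ℝ} (hL : 1 ≤ L) (hU : Fintype.card U ≤ Real.exp L) :
    𝔼 b : ι → ℤˣ, ∑ i, (b i : ℝ) * ((fun u ↦ (z b u : ℝ)) ⬝ᵥ A i *ᵥ fun u ↦ (z b u : ℝ)) ≤
      (∑ u, g u) * (Real.exp 1 * (2 * √(2 * L * ε))) := by
  classical
  obtain ⟨M, hML, hLM⟩ := exists_nat_pow_near hL one_lt_two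
  set N := 2 ^ (M + 1) with hN
  have hLN : L ≤ N := by rw [hN]; push_cast; exact hLM.le
  have hNL : (N : ℝ) ≤ 2 * L := by rw [hN, pow_succ']; push_cast; linarith
  have hg_sum : 0 ≤ ∑ u, g u := sum_nonneg fun u _ ↦ (hg u).le
  have hquad (b : ι → ℤˣ) :
      (∑ i, (b i : ℝ) * ((fun u ↦ (z b u : ℝ)) ⬝ᵥ A i *ᵥ fun u ↦ (z b u : ℝ))) ^ N ≤
        (∑ u, g u) ^ N * ((diagonal g⁻¹ * ∑ i, (b i : ℝ) • A i) ^ N).trace := by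
    have hsymm : (∑ i, (b i : ℝ) • A i).IsSymm := by
      simp only [IsSymm, transpose_sum, transpose_smul, (hA _).eq]
    simpa only [sum_mulVec, smul_mulVec, dotProduct_sum, dotProduct_smul, smul_eq_mul, sq,
      intUnit_mul_self, mul_one] using
      dotProduct_mulVec_pow_le_trace hg (fun u ↦ (z b u : ℝ)) M hsymm
  have hpow :
      (𝔼 b : ι → ℤˣ, ∑ i, (b i : ℝ) * ((fun u ↦ (z b u : ℝ)) ⬝ᵥ A i *ᵥ fun u ↦ (z b u : ℝ))) ^ N ≤
        ((∑ u, g u) * (Real.exp 1 * (2 * √(N * ε)))) ^ N :=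
    calc _ ≤ 𝔼 b : ι → ℤˣ, (∑ u, g u) ^ N *
            ((diagonal g⁻¹ * ∑ i, (b i : ℝ) • A i) ^ N).trace :=
          (expect_pow_le_expect_pow _ ((Nat.even_pow' (Nat.succ_ne_zero M)).2 even_two)).trans
            (expect_le_expect fun b _ ↦ hquad b)
      _ ≤ (∑ u, g u) ^ N * (Real.exp 1 ^ N * (2 * √(N * ε)) ^ N) := by
          rw [← mul_expect, ← Real.exp_nat_mul, mul_one]
          refine mul_le_mul_of_nonneg_left ?_ (pow_nonneg hg_sum N)
          refine (expect_trace_pow_le A hε hg hrow hrowε N).trans ?_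
          gcongr
          exact hU.trans (Real.exp_le_exp.2 hLN)
      _ = ((∑ u, g u) * (Real.exp 1 * (2 * √(N * ε)))) ^ N := by simp only [mul_pow]
  refine (le_of_pow_le_pow_left₀ (by positivity) (by positivity) hpow).trans ?_
  gcongr

end Trace
section Bipartite

variable {ι V W Ω : Type*} [Fintype ι] [DecidableEq ι] [Fintype V] [Fintype W]
  {ε L : ℝ} {g : V → ℝ} {h : W → ℝ}

open Matrix in
lemma expect_sum_dotProduct_mulVec_bipartite_le (B : ι → Matrix V W ℝ) (hε : 0 ≤ ε)
    (hg : ∀ v, 0 < g v) (hh : ∀ w, 0 < h w)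
    (hrow : ∀ v, ∑ i, ∑ w, |B i v w| ≤ g v) (hrowε : ∀ i v, ∑ w, |B i v w| ≤ ε * g v)
    (hcol : ∀ w, ∑ i, ∑ v, |B i v w| ≤ h w) (hcolε : ∀ i w, ∑ v, |B i v w| ≤ ε * h w)
    (x : (ι → ℤˣ) → V → ℤˣ) (y : (ι → ℤˣ) → W → ℤˣ) (hL : 1 ≤ L)
    (hVW : (Fintype.card V + Fintype.card W : ℝ) ≤ Real.exp L) :
    𝔼 b : ι → ℤˣ, ∑ i, (b i : ℝ) * ((fun v ↦ (x b v : ℝ)) ⬝ᵥ B i *ᵥ fun w ↦ (y b w : ℝ)) ≤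
      (∑ v, g v + ∑ w, h w) * (Real.exp 1 * √(2 * L * ε)) := by
  have hblock (b : ι → ℤˣ) (i : ι) :
      (fun u ↦ ((Sum.elim (x b) (y b) u : ℤˣ) : ℝ)) ⬝ᵥ
        fromBlocks 0 (B i) (B i)ᵀ 0 *ᵥ (fun u ↦ ((Sum.elim (x b) (y b) u : ℤˣ) : ℝ)) =
      2 * ((fun v ↦ (x b v : ℝ)) ⬝ᵥ B i *ᵥ fun w ↦ (y b w : ℝ)) := by
    have hsum : (fun u ↦ ((Sum.elim (x b) (y b) u : ℤˣ) : ℝ)) =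
        Sum.elim (fun v ↦ (x b v : ℝ)) fun w ↦ (y b w : ℝ) := by
      ext (u | u) <;> rfl
    rw [hsum, fromBlocks_mulVec, dotProduct_block]
    simp only [Sum.elim_comp_inl, Sum.elim_comp_inr, zero_mulVec, zero_add, add_zero]
    rw [mulVec_transpose, dotProduct_comm (fun w ↦ (y b w : ℝ)), ← dotProduct_mulVec, two_mul]
  have hdouble := expect_sum_dotProduct_mulVec_le (fun i ↦ fromBlocks 0 (B i) (B i)ᵀ 0)
    (fun i ↦ IsSymm.fromBlocks isSymm_zero rfl isSymm_zero) hε (g := Sum.elim g h)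
    (by rintro (u | u); exacts [hg u, hh u])
    (by rintro (u | u) <;> simp [Fintype.sum_sum_type, hrow, hcol])
    (by rintro i (u | u) <;> simp [Fintype.sum_sum_type, hrowε, hcolε])
    (fun b ↦ Sum.elim (x b) (y b)) hL (by simpa using hVW)
  simp_rw [hblock, mul_left_comm _ (2 : ℝ), ← mul_sum] at hdouble
  rw [← mul_expect, Fintype.sum_sum_type] at hdouble
  simp only [Sum.elim_inl, Sum.elim_inr] at hdouble
  linarith

variable [DecidableEq V] [DecidableEq W]

open Matrix in
lemma dotProduct_single_mulVec (v : V) (w : W) (a : ℝ) (x : V → ℝ) (y : W → ℝ) :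
    x ⬝ᵥ single v w a *ᵥ y = a * (x v * y w) := by
  rw [single_mulVec, ← Pi.single, dotProduct_single]
  ring

omit [Fintype V] in
lemma sum_abs_sum_single_apply_le (F : Finset Ω) (s : Ω → V) (t : Ω → W) (a : Ω → ℝ) (v : V) :
    ∑ w, |(∑ o ∈ F, Matrix.single (s o) (t o) (a o)) v w| ≤ ∑ o ∈ F with s o = v, |a o| := by
  calc ∑ w, |(∑ o ∈ F, Matrix.single (s o) (t o) (a o)) v w|
      ≤ ∑ w, ∑ o ∈ F, |Matrix.single (s o) (t o) (a o) v w| :=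
        sum_le_sum fun w _ ↦ by
          rw [Matrix.sum_apply]
          exact abs_sum_le_sum_abs _ _
    _ = ∑ o ∈ F with s o = v, |a o| := by
        rw [sum_comm, sum_filter]
        refine sum_congr rfl fun o _ ↦ ?_
        by_cases hv : s o = v <;> simp [Matrix.single_apply, hv, apply_ite abs]

open Matrix in
lemma expect_sum_edges_le [Fintype Ω] (s : Ω → V) (t : Ω → W) (lab : Ω → ι) (a : Ω → ℝ) (hε : 0 ≤ ε)
    (hg : ∀ v, 0 < g v) (hh : ∀ w, 0 < h w)
    (hs : ∀ v, ∑ o with s o = v, |a o| ≤ g v) (ht : ∀ w, ∑ o with t o = w, |a o| ≤ h w)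
    (hsε : ∀ i v, ∑ o with lab o = i ∧ s o = v, |a o| ≤ ε * g v)
    (htε : ∀ i w, ∑ o with lab o = i ∧ t o = w, |a o| ≤ ε * h w)
    (x : (ι → ℤˣ) → V → ℤˣ) (y : (ι → ℤˣ) → W → ℤˣ) (hL : 1 ≤ L)
    (hVW : (Fintype.card V + Fintype.card W : ℝ) ≤ Real.exp L) :
    𝔼 b : ι → ℤˣ, ∑ o, (b (lab o) : ℝ) * (a o * (x b (s o) * y b (t o))) ≤
      (∑ v, g v + ∑ w, h w) * (Real.exp 1 * √(2 * L * ε)) := by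
  set B : ι → Matrix V W ℝ := fun i ↦ ∑ o with lab o = i, Matrix.single (s o) (t o) (a o) with hB
  have hBt (i : ι) (v : V) (w : W) :
      B i v w = (∑ o with lab o = i, Matrix.single (t o) (s o) (a o)) w v := by
    simp only [hB, Matrix.sum_apply, Matrix.single_apply, and_comm]
  have hquad (b : ι → ℤˣ) : ∑ i, (b i : ℝ) * ((fun v ↦ (x b v : ℝ)) ⬝ᵥ B i *ᵥ fun w ↦ (y b w : ℝ)) =
      ∑ o, (b (lab o) : ℝ) * (a o * (x b (s o) * y b (t o))) := by
    rw [← sum_fiberwise _ lab]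
    refine sum_congr rfl fun i _ ↦ ?_
    simp only [hB, sum_mulVec, dotProduct_sum, mul_sum, dotProduct_single_mulVec]
    exact sum_congr rfl fun o ho ↦ by rw [(mem_filter.1 ho).2]
  have hrow (i : ι) (v : V) : ∑ w, |B i v w| ≤ ∑ o with lab o = i ∧ s o = v, |a o| := by
    rw [← filter_filter]
    exact sum_abs_sum_single_apply_le _ s t a v
  have hcol (i : ι) (w : W) : ∑ v, |B i v w| ≤ ∑ o with lab o = i ∧ t o = w, |a o| := by
    rw [← filter_filter]
    simp only [hBt]
    exact sum_abs_sum_single_apply_le _ t s a w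
  simp_rw [← hquad]
  refine expect_sum_dotProduct_mulVec_bipartite_le B hε hg hh (fun v ↦ ?_)
    (fun i v ↦ (hrow i v).trans (hsε i v)) (fun w ↦ ?_) (fun i w ↦ (hcol i w).trans (htε i w))
    x y hL hVW
  · refine ((sum_le_sum fun i _ ↦ hrow i v).trans_eq ?_).trans (hs v)
    simp_rw [and_comm (a := lab _ = _), ← filter_filter]
    exact sum_fiberwise _ lab _
  · refine ((sum_le_sum fun i _ ↦ hcol i w).trans_eq ?_).trans (ht w)
    simp_rw [and_comm (a := lab _ = _), ← filter_filter]
    exact sum_fiberwise _ lab _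

end Bipartite

/-! ### Reweighting edge copies -/

section Reweighting

variable {ι E Y V : Type*} [DecidableEq ι] [Fintype E] [Fintype Y] [DecidableEq V]

/-- The number of edge copies `(e, y)` of color `i` whose endpoint, under the endpoint map `S`,
is `u`. -/
def endpointLoad (lab : E → ι) (S : E → Y → V) (i : ι) (u : V) : ℕ :=
  #{p : E × Y | lab p.1 = i ∧ S p.1 p.2 = u}

lemma card_filter_lt_mul_le {f : Y → ℝ} (hf : ∀ y, 0 ≤ f y) (c : ℝ) :
    #{y | c < f y} * c ≤ ∑ y, f y :=
  calc #{y | c < f y} * c = ∑ y with c < f y, c := by rw [sum_const, nsmul_eq_mul]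
    _ ≤ ∑ y with c < f y, f y := sum_le_sum fun y hy ↦ (mem_filter.1 hy).2.le
    _ ≤ ∑ y, f y := sum_le_sum_of_subset_of_nonneg (filter_subset _ _) fun y _ _ ↦ hf y

lemma half_card_le_card_filter_le_and_le {f g : Y → ℝ} (hf : ∀ y, 0 ≤ f y) (hg : ∀ y, 0 ≤ g y)
    {κ : ℝ} (hκ : 0 < κ) (hf_sum : ∑ y, f y ≤ Fintype.card Y * κ)
    (hg_sum : ∑ y, g y ≤ Fintype.card Y * κ) :
    (Fintype.card Y : ℝ) / 2 ≤ #{y | f y ≤ 4 * κ ∧ g y ≤ 4 * κ} := by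
  classical
  have hbad {φ : Y → ℝ} (hφ : ∀ y, 0 ≤ φ y) (hφ_sum : ∑ y, φ y ≤ Fintype.card Y * κ) :
      (#{y | 4 * κ < φ y} : ℝ) ≤ Fintype.card Y / 4 := by
    have := (card_filter_lt_mul_le hφ (4 * κ)).trans hφ_sum
    rw [le_div_iff₀ four_pos]
    exact le_of_mul_le_mul_right (by linarith) hκ
  have hcover : (univ : Finset Y) ⊆ univ.filter (fun y ↦ f y ≤ 4 * κ ∧ g y ≤ 4 * κ) ∪
      (univ.filter (fun y ↦ 4 * κ < f y) ∪ univ.filter fun y ↦ 4 * κ < g y) := by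
    intro y _
    simp only [mem_union, mem_filter, mem_univ, true_and]
    grind
  have hcard := (card_le_card hcover).trans <| (card_union_le _ _).trans
    (Nat.add_le_add_left (card_union_le _ _) _)
  rw [card_univ] at hcard
  have : (Fintype.card Y : ℝ) ≤ #{y | f y ≤ 4 * κ ∧ g y ≤ 4 * κ} +
      (#{y | 4 * κ < f y} + #{y | 4 * κ < g y}) := by exact_mod_cast hcard
  linarith [hbad hf hf_sum, hbad hg hg_sum]

/-- By Markov's inequality at least half of the copies of each edge have both endpoints of load at
most `4 * κ`; the weight is spread evenly over these. -/
lemma exists_weights_le_of_sum_endpointLoad_le [Nonempty Y] (lab : E → ι) (S T : E → Y → V) {κ : ℝ}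
    (hκ : 0 < κ)
    (hS : ∀ e, ∑ y, (endpointLoad lab S (lab e) (S e y) : ℝ) ≤ Fintype.card Y * κ)
    (hT : ∀ e, ∑ y, (endpointLoad lab T (lab e) (T e y) : ℝ) ≤ Fintype.card Y * κ) :
    ∃ ω : E → Y → ℝ, (∀ e y, 0 ≤ ω e y) ∧ (∀ e y, ω e y ≤ 2 / Fintype.card Y) ∧
      (∀ e, ∑ y, ω e y = 1) ∧
      (∀ i u, ∑ p : E × Y with lab p.1 = i ∧ S p.1 p.2 = u, ω p.1 p.2 ≤
        4 * κ * (2 / Fintype.card Y)) ∧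
      ∀ i u, ∑ p : E × Y with lab p.1 = i ∧ T p.1 p.2 = u, ω p.1 p.2 ≤
        4 * κ * (2 / Fintype.card Y) := by
  classical
  have hY : (0 : ℝ) < Fintype.card Y := by exact_mod_cast Fintype.card_pos
  set good : E → Finset Y := fun e ↦ {y | (endpointLoad lab S (lab e) (S e y) : ℝ) ≤ 4 * κ ∧
    (endpointLoad lab T (lab e) (T e y) : ℝ) ≤ 4 * κ} with hgood
  have hcard (e : E) : (Fintype.card Y : ℝ) / 2 ≤ #(good e) :=
    half_card_le_card_filter_le_and_le (fun _ ↦ Nat.cast_nonneg _) (fun _ ↦ Nat.cast_nonneg _)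
      hκ (hS e) (hT e)
  set ω : E → Y → ℝ := fun e y ↦ if y ∈ good e then (#(good e) : ℝ)⁻¹ else 0 with hω
  have hω_le (e : E) (y : Y) : ω e y ≤ 2 / Fintype.card Y := by
    simp only [hω]
    split_ifs
    · rw [← inv_div]
      exact inv_anti₀ (half_pos hY) (hcard e)
    · positivity
  have htotal (R : E → Y → V)
      (hR : ∀ e, ∀ y ∈ good e, (endpointLoad lab R (lab e) (R e y) : ℝ) ≤ 4 * κ) (i : ι) (u : V) :
      ∑ p : E × Y with lab p.1 = i ∧ R p.1 p.2 = u, ω p.1 p.2 ≤ 4 * κ * (2 / Fintype.card Y) := by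
    by_cases h : ∃ p : E × Y, (lab p.1 = i ∧ R p.1 p.2 = u) ∧ p.2 ∈ good p.1
    · obtain ⟨p, ⟨rfl, rfl⟩, hp⟩ := h
      refine (sum_le_card_nsmul _ _ _ fun p' _ ↦ hω_le p'.1 p'.2).trans ?_
      rw [nsmul_eq_mul]
      exact mul_le_mul_of_nonneg_right (hR p.1 p.2 hp) (by positivity)
    · push Not at h
      refine (sum_eq_zero fun p hp ↦ if_neg (h p (mem_filter.1 hp).2)).trans_le ?_
      positivity
  refine ⟨ω, fun e y ↦ ?_, hω_le, fun e ↦ ?_,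
    htotal S fun e y hy ↦ (mem_filter.1 hy).2.1, htotal T fun e y hy ↦ (mem_filter.1 hy).2.2⟩
  · simp only [hω]
    split_ifs <;> positivity
  · simp only [hω, sum_ite_mem, univ_inter, sum_const, nsmul_eq_mul]
    exact mul_inv_cancel₀ ((half_pos hY).trans_le (hcard e)).ne'

lemma sum_card_filter_endpoint_eq [Fintype V] (R : E → Y → V) :
    ∑ v, (#{p : E × Y | R p.1 p.2 = v} : ℝ) = Fintype.card E * Fintype.card Y := by
  exact_mod_cast (card_eq_sum_card_fiberwise fun _ _ ↦ mem_univ _).symm.trans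
    (Fintype.card_prod E Y)

/-- Each vertex is charged its number of edge copies, padded by the average `D`: the padding bounds
the share of a single color at vertices of small degree and only doubles the total charge. -/
lemma expect_sum_weighted_copies_le [Fintype ι] [Fintype V] [Nonempty E] [Nonempty Y] [Nonempty V]
    (lab : E → ι) (S T : E → Y → V) {a : E → Y → ℝ} {κ L : ℝ} (hκ : 0 < κ)
    (ha : ∀ e y, |a e y| ≤ 2 / Fintype.card Y)
    (haS : ∀ i u, ∑ p : E × Y with lab p.1 = i ∧ S p.1 p.2 = u, |a p.1 p.2| ≤
      4 * κ * (2 / Fintype.card Y))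
    (haT : ∀ i u, ∑ p : E × Y with lab p.1 = i ∧ T p.1 p.2 = u, |a p.1 p.2| ≤
      4 * κ * (2 / Fintype.card Y))
    (x : (ι → ℤˣ) → V → ℤˣ) (hL : 1 ≤ L) (hV : 2 * (Fintype.card V : ℝ) ≤ Real.exp L) :
    𝔼 b : ι → ℤˣ, ∑ p : E × Y,
        (b (lab p.1) : ℝ) * (a p.1 p.2 * (x b (S p.1 p.2) * x b (T p.1 p.2))) ≤
      16 * Real.exp 1 * √(2 * L * (Fintype.card E * κ * (Fintype.card V / Fintype.card Y))) := by
  have : (0 : ℝ) < Fintype.card Y := by exact_mod_cast Fintype.card_pos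
  have : (0 : ℝ) < Fintype.card V := by exact_mod_cast Fintype.card_pos
  have hE : (0 : ℝ) < Fintype.card E := by exact_mod_cast Fintype.card_pos
  set D : ℝ := Fintype.card E * Fintype.card Y / Fintype.card V with hD
  have hD0 : 0 < D := by positivity
  set G : (E → Y → V) → V → ℝ := fun R v ↦
    2 / Fintype.card Y * (D + #{p : E × Y | R p.1 p.2 = v}) with hG
  have hG_pos (R : E → Y → V) (v : V) : 0 < G R v := by positivity
  have hG_sum (R : E → Y → V) : ∑ v, G R v = 4 * Fintype.card E := by
    rw [← mul_sum, sum_add_distrib, sum_card_filter_endpoint_eq, sum_const, nsmul_eq_mul,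
      card_univ, hD]
    field_simp
    norm_num
  have hdeg (R : E → Y → V) (v : V) : ∑ p : E × Y with R p.1 p.2 = v, |a p.1 p.2| ≤ G R v := by
    refine (sum_le_card_nsmul _ _ _ fun p _ ↦ ha p.1 p.2).trans ?_
    rw [nsmul_eq_mul, mul_comm]
    exact mul_le_mul_of_nonneg_left (le_add_of_nonneg_left hD0.le) (by positivity)
  have hshare (R : E → Y → V) (v : V) : 4 * κ * (2 / Fintype.card Y) ≤ 4 * κ / D * G R v :=
    calc 4 * κ * (2 / Fintype.card Y) = 4 * κ / D * (2 / Fintype.card Y * D) := by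
          rw [mul_left_comm, div_mul_cancel₀ _ hD0.ne', mul_comm]
      _ ≤ 4 * κ / D * G R v := by
          refine mul_le_mul_of_nonneg_left ?_ (by positivity)
          exact mul_le_mul_of_nonneg_left (le_add_of_nonneg_right (by positivity)) (by positivity)
  refine (expect_sum_edges_le _ _ (fun p : E × Y ↦ lab p.1) _ (by positivity) (hG_pos S) (hG_pos T)
    (hdeg S) (hdeg T) (fun i v ↦ (haS i v).trans (hshare S v))
    (fun i v ↦ (haT i v).trans (hshare T v)) x x hL (by linarith)).trans_eq ?_
  have hsqrt : √(2 * L * (4 * κ / D)) * Fintype.card E =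
      2 * √(2 * L * (Fintype.card E * κ * (Fintype.card V / Fintype.card Y))) := by
    rw [← Real.sqrt_sq hE.le, ← Real.sqrt_mul' _ (sq_nonneg _), ← Real.sqrt_sq zero_le_two,
      ← Real.sqrt_mul (sq_nonneg _), hD, Real.sqrt_sq hE.le, Real.sqrt_sq zero_le_two]
    congr 1
    field_simp
    norm_num
  rw [hG_sum, hG_sum]
  linear_combination 8 * Real.exp 1 * hsqrt

lemma expect_sum_copies_le [Fintype ι] [Fintype V] [Nonempty Y] [Nonempty V]
    (lab : E → ι) (S T : E → Y → V) {κ L : ℝ} (hκ : 0 < κ)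
    (hS : ∀ e, ∑ y, (endpointLoad lab S (lab e) (S e y) : ℝ) ≤ Fintype.card Y * κ)
    (hT : ∀ e, ∑ y, (endpointLoad lab T (lab e) (T e y) : ℝ) ≤ Fintype.card Y * κ)
    {δ : E → ℝ} (hδ : ∀ e, |δ e| ≤ 1) (x : (ι → ℤˣ) → V → ℤˣ) {F : (ι → ℤˣ) → E → ℝ}
    (hF : ∀ b e y, (x b (S e y) : ℝ) * x b (T e y) = F b e)
    (hL : 1 ≤ L) (hV : 2 * (Fintype.card V : ℝ) ≤ Real.exp L) :
    𝔼 b : ι → ℤˣ, ∑ e, (b (lab e) : ℝ) * (δ e * F b e) ≤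
      16 * Real.exp 1 * √(2 * L * (Fintype.card E * κ * (Fintype.card V / Fintype.card Y))) := by
  rcases isEmpty_or_nonempty E with hE | hE
  · simp
  obtain ⟨ω, hω0, hωY, hω_sum, hωS, hωT⟩ :=
    exists_weights_le_of_sum_endpointLoad_le lab S T hκ hS hT
  have hδω (e : E) (y : Y) : |δ e * ω e y| ≤ ω e y := by
    rw [abs_mul, abs_of_nonneg (hω0 e y)]
    exact mul_le_of_le_one_left (hω0 e y) (hδ e)
  have hcopies (b : ι → ℤˣ) : ∑ e, (b (lab e) : ℝ) * (δ e * F b e) = ∑ p : E × Y,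
      (b (lab p.1) : ℝ) * (δ p.1 * ω p.1 p.2 * (x b (S p.1 p.2) * x b (T p.1 p.2))) := by
    simp only [Fintype.sum_prod_type, hF]
    refine sum_congr rfl fun e _ ↦ ?_
    calc (b (lab e) : ℝ) * (δ e * F b e) = ∑ y, ω e y * ((b (lab e) : ℝ) * (δ e * F b e)) := by
          rw [← sum_mul, hω_sum, one_mul]
      _ = ∑ y, (b (lab e) : ℝ) * (δ e * ω e y * F b e) := sum_congr rfl fun y _ ↦ by ring
  simp_rw [hcopies]
  exact expect_sum_weighted_copies_le lab S T (a := fun e y ↦ δ e * ω e y) hκ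
    (fun e y ↦ (hδω e y).trans (hωY e y))
    (fun i u ↦ (sum_le_sum fun p _ ↦ hδω p.1 p.2).trans (hωS i u))
    (fun i u ↦ (sum_le_sum fun p _ ↦ hδω p.1 p.2).trans (hωT i u)) x hL hV

end Reweighting

/-! ### The Kikuchi lift -/

section Kikuchi

variable {E ι J P V : Type*} [DecidableEq P]

/-- The lift of a `J`-tuple `v` of vertices to the Kikuchi graph, whose vertices are `J`-tuples of
words `P → V`: the copy `y` of a hyperedge selects in every coordinate `j` a position and a word,
and `v j` is written into that word at that position. -/
def kikuchiLift (v : J → V) (y : J → P × (P → V)) : J → P → V :=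
  fun j ↦ Function.update (y j).2 (y j).1 (v j)

variable [Fintype P]

lemma prod_update_mul_prod_update (x : V → ℤˣ) (p : P) (ξ : P → V) (v w : V) :
    (∏ i, x (Function.update ξ p v i)) * ∏ i, x (Function.update ξ p w i) = x v * x w := by
  rw [← prod_mul_distrib, Fintype.prod_eq_single p]
  · simp
  · intro i hi
    simp [Function.update_of_ne hi]

variable [DecidableEq V]

lemma card_filter_update_apply_eq_le (s : P → V) (p : P) (u v : V) :
    #{p' | Function.update s p u p' = v} ≤ (if v = u then 1 else 0) + #{p' | s p' = v} := by
  have hsub : ({p' | Function.update s p u p' = v} : Finset P) ⊆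
      (if v = u then {p} else ∅) ∪ univ.filter fun p' ↦ s p' = v := by
    intro p' hp'
    rw [mem_filter_univ] at hp'
    rcases eq_or_ne p' p with rfl | hne
    · rw [Function.update_self] at hp'
      simp [hp']
    · rw [Function.update_of_ne hne] at hp'
      simp [hp']
  refine (card_le_card hsub).trans ((card_union_le _ _).trans (Nat.add_le_add_right ?_ _))
  split_ifs <;> simp

variable [Fintype V]

lemma card_filter_update_eq (s : P → V) (v : V) :
    #{y : P × (P → V) | Function.update y.2 y.1 v = s} = Fintype.card V * #{p | s p = v} := by
  have himage : ({y : P × (P → V) | Function.update y.2 y.1 v = s} : Finset _) =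
      (({p | s p = v} : Finset P) ×ˢ (univ : Finset V)).image
        fun z ↦ (z.1, Function.update s z.1 z.2) := by
    ext ⟨p, ξ⟩
    simp only [mem_filter, mem_univ, true_and, mem_image, mem_product, and_true, Prod.exists,
      Prod.mk.injEq]
    constructor
    · rintro rfl
      exact ⟨p, ξ p, by simp, rfl, by simp⟩
    · rintro ⟨p, w, hp, rfl, rfl⟩
      rw [Function.update_idem, ← hp, Function.update_eq_self]
  rw [himage, card_image_of_injOn, card_product, card_univ, mul_comm]
  rintro ⟨p, w⟩ - ⟨p', w'⟩ - h
  obtain ⟨rfl, hw⟩ := Prod.mk.inj h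
  simpa using congrFun hw p

lemma sum_card_filter_apply_eq (v : V) :
    Fintype.card V * ∑ s : P → V, #{p | s p = v} = Fintype.card (P × (P → V)) := by
  simp_rw [mul_sum, ← card_filter_update_eq]
  exact (card_eq_sum_card_fiberwise fun _ _ ↦ mem_univ _).symm

lemma sum_card_filter_update_apply_eq_le [Nonempty V] (u v : V) :
    ∑ y : P × (P → V), (#{p | Function.update y.2 y.1 u p = v} : ℝ) ≤
      Fintype.card (P × (P → V)) *
        ((if v = u then 1 else 0) + Fintype.card P / Fintype.card V) := by
  have hV : (0 : ℝ) < Fintype.card V := by exact_mod_cast Fintype.card_pos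
  have hsum : ∑ s : P → V, (#{p | s p = v} : ℝ) =
      Fintype.card (P × (P → V)) / Fintype.card V := by
    rw [eq_div_iff hV.ne', mul_comm]
    exact_mod_cast sum_card_filter_apply_eq v
  calc ∑ y : P × (P → V), (#{p | Function.update y.2 y.1 u p = v} : ℝ)
      ≤ ∑ y : P × (P → V), ((if v = u then 1 else 0) + (#{p | y.2 p = v} : ℝ)) :=
        sum_le_sum fun y _ ↦ by exact_mod_cast card_filter_update_apply_eq_le y.2 y.1 u v
    _ = _ := by
        rw [sum_add_distrib, sum_const, card_univ, nsmul_eq_mul,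
          Fintype.sum_prod_type (fun y : P × (P → V) ↦ (#{p | y.2 p = v} : ℝ))]
        simp only [hsum, sum_const, card_univ, nsmul_eq_mul]
        ring

variable [Fintype J] [DecidableEq J] [Fintype E] [DecidableEq ι]

lemma endpointLoad_kikuchiLift (lab : E → ι) (v : E → J → V) (i : ι) (s : J → P → V) :
    endpointLoad lab (fun e ↦ kikuchiLift (v e)) i s =
      ∑ e with lab e = i, ∏ j, Fintype.card V * #{p | s j p = v e j} := by
  have hfiber (w : J → V) : #{y : J → P × (P → V) | kikuchiLift w y = s} =
      ∏ j, Fintype.card V * #{p | s j p = w j} := by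
    simp_rw [← card_filter_update_eq, ← Fintype.card_piFinset]
    congr 1
    ext y
    simp [kikuchiLift, funext_iff, Fintype.mem_piFinset]
  simp_rw [← hfiber, endpointLoad, card_filter, Fintype.sum_prod_type, sum_filter]
  refine sum_congr rfl fun e _ ↦ ?_
  by_cases he : lab e = i <;> simp [he]

lemma sum_endpointLoad_kikuchiLift_le [Nonempty V] (lab : E → ι) (v : E → J → V) {κ : ℝ} {e₀ : E}
    (h : ∑ e with lab e = lab e₀,
      ∏ j, ((if v e j = v e₀ j then (1 : ℝ) else 0) + Fintype.card P / Fintype.card V) ≤ κ) :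
    ∑ y : J → P × (P → V),
      (endpointLoad lab (fun e ↦ kikuchiLift (v e)) (lab e₀) (kikuchiLift (v e₀) y) : ℝ) ≤
      Fintype.card (J → P × (P → V)) * (Fintype.card V ^ Fintype.card J * κ) := by
  have hcopies (e : E) : ∑ y : J → P × (P → V),
      ∏ j, (#{p | kikuchiLift (v e₀) y j p = v e j} : ℝ) ≤ Fintype.card (J → P × (P → V)) *
        ∏ j, ((if v e j = v e₀ j then (1 : ℝ) else 0) + Fintype.card P / Fintype.card V) := by
    calc _ = ∏ j, ∑ y : P × (P → V),
          (#{p | Function.update y.2 y.1 (v e₀ j) p = v e j} : ℝ) :=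
        (Fintype.prod_sum fun j (y : P × (P → V)) ↦
          (#{p | Function.update y.2 y.1 (v e₀ j) p = v e j} : ℝ)).symm
      _ ≤ ∏ j, Fintype.card (P × (P → V)) *
          ((if v e j = v e₀ j then (1 : ℝ) else 0) + Fintype.card P / Fintype.card V) :=
        prod_le_prod (fun _ _ ↦ by positivity)
          fun j _ ↦ sum_card_filter_update_apply_eq_le (v e₀ j) (v e j)
      _ = _ := by rw [prod_mul_distrib, prod_const, card_univ, Fintype.card_fun, Nat.cast_pow]
  simp_rw [endpointLoad_kikuchiLift, prod_mul_distrib, prod_const, card_univ]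
  push_cast
  rw [sum_comm]
  simp_rw [← mul_sum]
  calc _ ≤ (Fintype.card V : ℝ) ^ Fintype.card J * ∑ e with lab e = lab e₀,
        (Fintype.card (J → P × (P → V)) * ∏ j, ((if v e j = v e₀ j then (1 : ℝ) else 0) +
          Fintype.card P / Fintype.card V)) := by
        gcongr
        exact hcopies _
    _ ≤ _ := by
        rw [← mul_sum, mul_left_comm]
        gcongr

lemma expect_sum_prod_le_of_kikuchi [Fintype ι] [Nonempty P] [Nonempty V] (lab : E → ι)
    (v w : E → J → V) {κ L : ℝ} (hκ : 0 < κ)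
    (hv : ∀ e₀, ∑ e with lab e = lab e₀,
      ∏ j, ((if v e j = v e₀ j then (1 : ℝ) else 0) + Fintype.card P / Fintype.card V) ≤ κ)
    (hw : ∀ e₀, ∑ e with lab e = lab e₀,
      ∏ j, ((if w e j = w e₀ j then (1 : ℝ) else 0) + Fintype.card P / Fintype.card V) ≤ κ)
    {δ : E → ℝ} (hδ : ∀ e, |δ e| ≤ 1) (x : (ι → ℤˣ) → V → ℤˣ) (hL : 1 ≤ L)
    (hV : 2 * (Fintype.card (J → P → V) : ℝ) ≤ Real.exp L) :
    𝔼 b : ι → ℤˣ, ∑ e, (b (lab e) : ℝ) * (δ e * ∏ j, (x b (v e j) : ℝ) * x b (w e j)) ≤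
      16 * Real.exp 1 * √(2 * L *
        (Fintype.card E * κ * (Fintype.card V / Fintype.card P) ^ Fintype.card J)) := by
  have : (0 : ℝ) < Fintype.card V := by exact_mod_cast Fintype.card_pos
  refine (expect_sum_copies_le (κ := Fintype.card V ^ Fintype.card J * κ) lab
    (fun e ↦ kikuchiLift (v e)) (fun e ↦ kikuchiLift (w e)) (by positivity)
    (fun e ↦ sum_endpointLoad_kikuchiLift_le lab v (hv e))
    (fun e ↦ sum_endpointLoad_kikuchiLift_le lab w (hw e)) hδ
    (fun b s ↦ ∏ j, ∏ i, x b (s j i)) (fun b e y ↦ ?_) hL hV).trans_eq ?_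
  · rw [← Int.cast_mul, ← Units.val_mul, ← prod_mul_distrib]
    simp_rw [kikuchiLift, prod_update_mul_prod_update]
    push_cast
    rfl
  · simp only [Fintype.card_fun, Fintype.card_prod]
    push_cast
    rw [mul_pow, div_pow]
    field_simp

end Kikuchi

/-! ### Decoupling -/

section Decoupling

variable {ι Z X : Type*} [Fintype ι] [DecidableEq ι] [Fintype Z]

lemma expect_one_add_mul_one_sub_intUnit {i j : ι} (hij : i ≠ j) :
    𝔼 τ : ι → ℤˣ, (1 + (τ i : ℝ)) * (1 - τ j) = 1 := by
  have hi := expect_prod_intUnit_eq_zero (S := {i}) (by simp)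
  have hj := expect_prod_intUnit_eq_zero (S := {j}) (by simp)
  have hpair := expect_prod_intUnit_eq_zero (S := {i, j}) (by simp)
  simp only [prod_singleton, prod_pair hij] at hi hj hpair
  calc 𝔼 τ : ι → ℤˣ, (1 + (τ i : ℝ)) * (1 - τ j)
      = 𝔼 τ : ι → ℤˣ, (1 + (τ i : ℝ) - τ j - τ i * τ j) := expect_congr rfl fun τ _ ↦ by ring
    _ = 1 := by
        rw [expect_sub_distrib, expect_sub_distrib, expect_add_distrib, hi, hj, hpair,
          Fintype.expect_const]
        norm_num

-- Rerandomizing the signs in `A` only does not change the law of `b`, and given the signs outside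
-- `A` each term is a weighted edge carrying the single random sign `b (l₁ z)`.
lemma expect_sum_separated_le {l₁ l₂ : Z → ι} {G : X → Z → ℝ} {B : ℝ}
    (hB : ∀ δ : Z → ℝ, (∀ z, |δ z| ≤ 1) → ∀ y : (ι → ℤˣ) → X,
      𝔼 s : ι → ℤˣ, ∑ z, (s (l₁ z) : ℝ) * (δ z * G (y s) z) ≤ B)
    (A : Finset ι) {c : Z → ℝ} (hc : ∀ z, |c z| ≤ 1)
    (hA : ∀ z, c z ≠ 0 → l₁ z ∈ A ∧ l₂ z ∉ A) (y : (ι → ℤˣ) → X) :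
    𝔼 b : ι → ℤˣ, ∑ z, c z * ((b (l₁ z) : ℝ) * b (l₂ z) * G (y b) z) ≤ B := by
  set f : (ι → ℤˣ) → ℝ := fun b ↦ ∑ z, c z * ((b (l₁ z) : ℝ) * b (l₂ z) * G (y b) z)
  have hshift (c : ι → ℤˣ) : 𝔼 b, f (b * c) = 𝔼 b, f b :=
    Fintype.expect_equiv (Equiv.mulRight c) _ _ fun _ ↦ rfl
  calc 𝔼 b, f b = 𝔼 s : ι → ℤˣ, 𝔼 b, f (b * A.piecewise s 1) := by
        simp only [hshift, Fintype.expect_const]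
    _ = 𝔼 b : ι → ℤˣ, 𝔼 s : ι → ℤˣ, f (b * A.piecewise s 1) := expect_comm ..
    _ ≤ 𝔼 _b : ι → ℤˣ, B := expect_le_expect fun b _ ↦ ?_
    _ = B := Fintype.expect_const B
  have hδ (z : Z) : |(b (l₁ z) : ℝ) * b (l₂ z) * c z| ≤ 1 := by
    simpa only [abs_mul, abs_unit_intCast, one_mul] using hc z
  refine le_of_eq_of_le (expect_congr rfl fun s _ ↦ sum_congr rfl fun z _ ↦ ?_)
    (hB _ hδ fun s ↦ y (b * A.piecewise s 1))
  rcases eq_or_ne (c z) 0 with hcz | hcz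
  · simp [hcz]
  · simp only [Pi.mul_apply, piecewise_eq_of_mem _ _ _ (hA z hcz).1,
      piecewise_eq_of_notMem _ _ _ (hA z hcz).2, Pi.one_apply, mul_one, Units.val_mul, Int.cast_mul]
    ring

lemma expect_sum_mul_le_four_mul {l₁ l₂ : Z → ι} (hl : ∀ z, l₁ z ≠ l₂ z) {G : X → Z → ℝ} {B : ℝ}
    (hB : ∀ δ : Z → ℝ, (∀ z, |δ z| ≤ 1) → ∀ y : (ι → ℤˣ) → X,
      𝔼 s : ι → ℤˣ, ∑ z, (s (l₁ z) : ℝ) * (δ z * G (y s) z) ≤ B) (y : (ι → ℤˣ) → X) :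
    𝔼 b : ι → ℤˣ, ∑ z, (b (l₁ z) : ℝ) * b (l₂ z) * G (y b) z ≤ 4 * B := by
  set c : (ι → ℤˣ) → Z → ℝ := fun τ z ↦ (1 + (τ (l₁ z) : ℝ)) * (1 - τ (l₂ z)) / 4 with hc
  have hc_expect (z : Z) : 𝔼 τ, 4 * c τ z = 1 := by
    simpa only [hc, mul_div_cancel₀ _ (four_ne_zero' ℝ)]
      using expect_one_add_mul_one_sub_intUnit (hl z)
  have hc_abs (τ : ι → ℤˣ) (z : Z) : |c τ z| ≤ 1 := by
    rcases Int.units_eq_one_or (τ (l₁ z)) with h₁ | h₁ <;>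
      rcases Int.units_eq_one_or (τ (l₂ z)) with h₂ | h₂ <;> norm_num [hc, h₁, h₂]
  have hc_ne (τ : ι → ℤˣ) (z : Z) (hz : c τ z ≠ 0) :
      l₁ z ∈ ({i | τ i = 1} : Finset ι) ∧ l₂ z ∉ ({i | τ i = 1} : Finset ι) := by
    simp only [mem_filter_univ]
    rcases Int.units_eq_one_or (τ (l₁ z)) with h₁ | h₁ <;>
      rcases Int.units_eq_one_or (τ (l₂ z)) with h₂ | h₂ <;> simp_all
  calc 𝔼 b : ι → ℤˣ, ∑ z, (b (l₁ z) : ℝ) * b (l₂ z) * G (y b) z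
      = 𝔼 b : ι → ℤˣ, 𝔼 τ, 4 * ∑ z, c τ z * ((b (l₁ z) : ℝ) * b (l₂ z) * G (y b) z) := by
        simp_rw [mul_sum, ← mul_assoc (4 : ℝ), expect_sum_comm, ← expect_mul, hc_expect, one_mul]
    _ = 𝔼 τ, 4 * 𝔼 b : ι → ℤˣ, ∑ z, c τ z * ((b (l₁ z) : ℝ) * b (l₂ z) * G (y b) z) := by
        rw [expect_comm]
        simp_rw [mul_expect]
    _ ≤ 𝔼 _τ : ι → ℤˣ, 4 * B := expect_le_expect fun τ _ ↦ by
        gcongr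
        exact expect_sum_separated_le hB _ (hc_abs τ) (hc_ne τ) y
    _ = 4 * B := Fintype.expect_const _

end Decoupling

/-! ### Centered hypergraphs and pairs of hyperedges with a common center -/

lemma sum_prod_ite_add_eq {Z J V : Type*} [Fintype J] [DecidableEq J] [DecidableEq V]
    (s : Finset Z) (v : Z → J → V) (v₀ : J → V) (ρ : ℝ) :
    ∑ z ∈ s, ∏ j, ((if v z j = v₀ j then (1 : ℝ) else 0) + ρ) =
      ∑ K : Finset J, ρ ^ #Kᶜ * #{z ∈ s | ∀ j ∈ K, v z j = v₀ j} := by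
  simp_rw [Fintype.prod_add, prod_boole, prod_const, card_filter, Nat.cast_sum, mul_sum]
  rw [sum_comm]
  refine sum_congr rfl fun K _ ↦ sum_congr rfl fun z _ ↦ ?_
  split_ifs <;> simp

/-- A family of hyperedges indexed by `E` on the vertex set `V`: each hyperedge has a color and a
class, and consists of the center of its class together with a tail, listed injectively by `J`. -/
structure CenteredHypergraph (E ι Θ J V : Type*) where
  color : E → ι
  cls : E → Θ
  center : Θ → Finset V
  tail : E → J → V
  tail_injective (e : E) : Function.Injective (tail e)
  tail_notMem_center (e : E) (j : J) : tail e j ∉ center (cls e)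

namespace CenteredHypergraph

variable {E ι Θ J V : Type*} [DecidableEq V] {G : CenteredHypergraph E ι Θ J V}

lemma card_center_union_image_tail (e : E) (K : Finset J) :
    #(G.center (G.cls e) ∪ K.image (G.tail e)) = #(G.center (G.cls e)) + #K := by
  rw [card_union_of_disjoint, card_image_of_injective _ (G.tail_injective e)]
  simpa [disjoint_right] using fun j _ ↦ G.tail_notMem_center e j

variable [Fintype J] (G)

/-- The vertex set of the hyperedge indexed by `e`. -/
def edge (e : E) : Finset V := G.center (G.cls e) ∪ univ.image (G.tail e)

/-- Hyperedges of the same color form a matching. -/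
def IsMatchingColoring : Prop :=
  ∀ ⦃e e' : E⦄, G.color e = G.color e' → ¬ Disjoint (G.edge e) (G.edge e') → e = e'

/-- Ordered pairs of distinct hyperedges of the same class; in the product of their monomials the
common center cancels. -/
abbrev Pair : Type _ := {z : E × E // G.cls z.1 = G.cls z.2 ∧ z.1 ≠ z.2}

/-- One endpoint of the Kikuchi edge of a pair: the tail of the first hyperedge on `S` and that of
the second hyperedge off `S`. -/
def mixedTail [DecidableEq J] (S : Finset J) (z : G.Pair) : J → V :=
  S.piecewise (G.tail z.1.1) (G.tail z.1.2)

variable {G}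

lemma center_subset_edge (e : E) : G.center (G.cls e) ⊆ G.edge e := subset_union_left

lemma tail_mem_edge (e : E) (j : J) : G.tail e j ∈ G.edge e :=
  mem_union_right _ (mem_image_of_mem _ (mem_univ j))

lemma prod_edge {M : Type*} [CommMonoid M] (x : V → M) (e : E) :
    ∏ u ∈ G.edge e, x u = (∏ u ∈ G.center (G.cls e), x u) * ∏ j, x (G.tail e j) := by
  rw [edge, prod_union, prod_image (G.tail_injective e).injOn]
  simpa [disjoint_right] using G.tail_notMem_center e

lemma IsMatchingColoring.eq_of_mem (hG : G.IsMatchingColoring) {e e' : E} {u : V}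
    (hcolor : G.color e = G.color e') (he : u ∈ G.edge e) (he' : u ∈ G.edge e') : e = e' :=
  hG hcolor (not_disjoint_iff.2 ⟨u, he, he'⟩)

lemma IsMatchingColoring.eq_of_cls_eq (hG : G.IsMatchingColoring) {e e' : E}
    (hcenter : (G.center (G.cls e)).Nonempty) (hcolor : G.color e = G.color e')
    (hcls : G.cls e = G.cls e') : e = e' := by
  obtain ⟨u, hu⟩ := hcenter
  exact hG.eq_of_mem hcolor (center_subset_edge e hu) (center_subset_edge e' (hcls ▸ hu))

section Counting

variable [Fintype E] {t : ℕ} {D : ℕ → ℕ}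

lemma card_class_le (hcenter : ∀ θ, #(G.center θ) = t)
    (hD : ∀ U, #{e | U ⊆ G.edge e} ≤ D #U) [DecidableEq Θ] (θ : Θ) :
    #{e | G.cls e = θ} ≤ D t := by
  rw [← hcenter θ]
  refine (card_le_card fun e he ↦ ?_).trans (hD (G.center θ))
  obtain rfl := (mem_filter_univ e).1 he
  exact (mem_filter_univ e).2 (center_subset_edge e)

lemma card_color_le [Fintype V] [DecidableEq ι] (hG : G.IsMatchingColoring)
    (hcenter : ∀ θ, (G.center θ).Nonempty) (i : ι) : #{e | G.color e = i} ≤ Fintype.card V := by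
  choose c hc using hcenter
  refine card_le_card_of_injOn (fun e ↦ c (G.cls e)) (fun _ _ ↦ mem_univ _) fun e he e' he' h ↦ ?_
  have hcolor : G.color e = G.color e' := by simp_all
  have hcc : c (G.cls e) = c (G.cls e') := h
  exact hG.eq_of_mem hcolor (center_subset_edge e (hc _)) (hcc ▸ center_subset_edge e' (hc _))

variable [DecidableEq E] [DecidableEq Θ]

lemma card_pair_fst_mem_le (hcenter : ∀ θ, #(G.center θ) = t)
    (hD : ∀ U, #{e | U ⊆ G.edge e} ≤ D #U) (s : Finset E) :
    #{z : G.Pair | z.1.1 ∈ s} ≤ D t * #s := by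
  refine (card_le_mul_card_image (f := fun z : G.Pair ↦ z.1.1) _ (D t) fun e _ ↦ ?_).trans
    (Nat.mul_le_mul_left _ (card_le_card ?_))
  · refine (card_le_card_of_injOn (fun z ↦ z.1.2) (fun z hz ↦ ?_) fun z hz z' hz' h ↦ ?_).trans
      (card_class_le hcenter hD (G.cls e))
    · obtain ⟨-, rfl⟩ := mem_filter.1 hz
      simp [z.2.1]
    · exact Subtype.ext (Prod.ext ((mem_filter.1 hz).2.trans (mem_filter.1 hz').2.symm) h)
  · intro e he
    obtain ⟨z, hz, rfl⟩ := mem_image.1 he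
    exact (mem_filter_univ z).1 hz

variable [DecidableEq J] [DecidableEq ι]

lemma card_agreeing_le_of_mem (hG : G.IsMatchingColoring) (hcenter : ∀ θ, #(G.center θ) = t)
    (hD : ∀ U, #{e | U ⊆ G.edge e} ≤ D #U) {S K : Finset J} {j : J} (hjK : j ∈ K) (hjS : j ∈ S)
    (z₀ : G.Pair) :
    #{z : G.Pair | G.color z.1.1 = G.color z₀.1.1 ∧ ∀ j ∈ K, G.mixedTail S z j =
      G.mixedTail S z₀ j} ≤ D (t + #(K \ S)) := by
  have hfst {z : G.Pair} (hz : G.color z.1.1 = G.color z₀.1.1 ∧ ∀ j ∈ K, G.mixedTail S z j =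
      G.mixedTail S z₀ j) : z.1.1 = z₀.1.1 := by
    have htail := hz.2 j hjK
    simp only [mixedTail, piecewise_eq_of_mem _ _ _ hjS] at htail
    exact hG.eq_of_mem hz.1 (tail_mem_edge _ j) (htail ▸ tail_mem_edge _ j)
  set U := G.center (G.cls z₀.1.2) ∪ (K \ S).image (G.tail z₀.1.2)
  have hU : #U = t + #(K \ S) := by rw [card_center_union_image_tail, hcenter]
  rw [← hU]
  refine (card_le_card_of_injOn (fun z ↦ z.1.2) (fun z hz ↦ ?_) fun z hz z' hz' h ↦ ?_).trans (hD U)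
  · have hz := (mem_filter_univ z).1 hz
    refine (mem_filter_univ _).2 (union_subset ?_ (image_subset_iff.2 fun i hi ↦ ?_))
    · rw [← z₀.2.1, ← hfst hz, z.2.1]
      exact center_subset_edge _
    · have htail := hz.2 i (mem_sdiff.1 hi).1
      simp only [mixedTail, piecewise_eq_of_notMem _ _ _ (mem_sdiff.1 hi).2] at htail
      exact htail ▸ tail_mem_edge _ i
  · exact Subtype.ext <| Prod.ext
      ((hfst ((mem_filter_univ z).1 hz)).trans (hfst ((mem_filter_univ z').1 hz')).symm) h

lemma card_agreeing_le_of_disjoint (hG : G.IsMatchingColoring)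
    (hcenter : ∀ θ, (G.center θ).Nonempty) (hD : ∀ U, #{e | U ⊆ G.edge e} ≤ D #U)
    {S K : Finset J} (hKS : Disjoint K S) (z₀ : G.Pair) :
    #{z : G.Pair | G.color z.1.1 = G.color z₀.1.1 ∧ ∀ j ∈ K, G.mixedTail S z j =
      G.mixedTail S z₀ j} ≤ D #K := by
  rw [← card_image_of_injective K (G.tail_injective z₀.1.2)]
  refine (card_le_card_of_injOn (fun z ↦ z.1.2) (fun z hz ↦ ?_) fun z hz z' hz' h ↦ ?_).trans (hD _)
  · refine (mem_filter_univ _).2 (image_subset_iff.2 fun j hj ↦ ?_)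
    have htail := ((mem_filter_univ z).1 hz).2 j hj
    simp only [mixedTail, piecewise_eq_of_notMem _ _ _ (disjoint_left.1 hKS hj)] at htail
    exact htail ▸ tail_mem_edge _ j
  · have hcls : G.cls z.1.1 = G.cls z'.1.1 := by
      rw [z.2.1, z'.2.1]
      exact congrArg G.cls h
    have hcolor := ((mem_filter_univ z).1 hz).1.trans ((mem_filter_univ z').1 hz').1.symm
    exact Subtype.ext (Prod.ext (hG.eq_of_cls_eq (hcenter _) hcolor hcls) h)

end Counting

end CenteredHypergraph

/-! ### Agreement counts under the good-index conditions -/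

/-- The good-index conditions (1) and (2) on the co-degrees `D` of a `t + r`-uniform hypergraph,
written in powers of `a = n ^ (1 / (t + r))` so that all exponents are integers. -/
structure IsGoodScale (a : ℝ) (t r : ℕ) (D : ℕ → ℕ) : Prop where
  codegree_le (s : ℕ) (hs : 1 ≤ s) (hsr : 2 * s ≤ r + 1) :
    (D s : ℝ) ≤ D t * a ^ ((t : ℤ) + r - 2 * s)
  codegree_add_le (s : ℕ) (hsr : 2 * s ≤ r) :
    (D (t + s) : ℝ) ≤ D t * a ^ ((t : ℤ) - 2 * s - if Even t then 1 else 0)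

namespace IsGoodScale

variable {a : ℝ} {t r : ℕ} {D : ℕ → ℕ}

-- Here `β` is one of the two halves of `r`; oddness of `t + r` pays for the rounding.
lemma codegree_add_le_of_half (h : IsGoodScale a t r D) (ha : 1 ≤ a) (hD : Antitone D)
    (hodd : Odd (t + r)) {β s : ℕ} (hr : r ≤ 2 * β + 1) (hβ : 2 * β ≤ r + 1) (hs : s ≤ β) :
    (D (t + s) : ℝ) ≤ D t * a ^ (2 * ((β : ℤ) - s) + t - r) := by
  have hparity : Even t ↔ ¬ Even r := by
    rw [Nat.odd_add, ← Nat.not_odd_iff_even, ← Nat.not_odd_iff_even] at *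
    tauto
  by_cases hsr : 2 * s ≤ r
  · refine (h.codegree_add_le s hsr).trans ?_
    refine mul_le_mul_of_nonneg_left (zpow_le_zpow_right₀ ha ?_) (Nat.cast_nonneg _)
    simp only [Nat.even_iff] at hparity ⊢
    split_ifs <;> omega
  · have hr_odd : ¬ Even r := by
      rw [Nat.even_iff]
      omega
    calc (D (t + s) : ℝ) ≤ D (t + (s - 1)) := by exact_mod_cast hD (by omega)
      _ ≤ D t * a ^ ((t : ℤ) - 2 * (s - 1 : ℕ) - if Even t then 1 else 0) :=
        h.codegree_add_le (s - 1) (by omega)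
      _ = D t * a ^ (2 * ((β : ℤ) - s) + t - r) := by
        rw [if_pos (hparity.2 hr_odd)]
        congr 2
        omega

end IsGoodScale

lemma pow_le_two_pow_mul_zpow {a ρ : ℝ} (ha : 0 < a) (hρ : 0 ≤ ρ) (hρa : ρ ≤ 2 * a ^ (-2 : ℤ))
    {j r : ℕ} (hj : j ≤ r) : ρ ^ j ≤ 2 ^ r * a ^ (-2 * j : ℤ) :=
  calc ρ ^ j ≤ (2 * a ^ (-2 : ℤ)) ^ j := pow_le_pow_left₀ hρ hρa j
    _ = 2 ^ j * a ^ (-2 * j : ℤ) := by rw [mul_pow, zpow_mul, zpow_natCast]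
    _ ≤ 2 ^ r * a ^ (-2 * j : ℤ) := by
      gcongr
      norm_num

namespace CenteredHypergraph

variable {E ι Θ J V : Type*} [Fintype E] [DecidableEq E] [DecidableEq ι] [DecidableEq Θ]
  [Fintype J] [DecidableEq J] [DecidableEq V] {G : CenteredHypergraph E ι Θ J V}
  {t : ℕ} {D : ℕ → ℕ} {a ρ : ℝ}

lemma pow_mul_card_agreeing_le_of_inter (hG : G.IsMatchingColoring)
    (hcenter : ∀ θ, #(G.center θ) = t) (hD : ∀ U, #{e | U ⊆ G.edge e} ≤ D #U) (hanti : Antitone D)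
    (hgood : IsGoodScale a t (Fintype.card J) D) (hodd : Odd (t + Fintype.card J)) (ha : 1 ≤ a)
    (hρ : 0 ≤ ρ) (hρ1 : ρ ≤ 1) (hρa : ρ ≤ 2 * a ^ (-2 : ℤ)) {S K : Finset J}
    (hS : Fintype.card J ≤ 2 * #Sᶜ + 1) (hS' : 2 * #Sᶜ ≤ Fintype.card J + 1)
    (hKS : (K ∩ S).Nonempty) (z₀ : G.Pair) :
    ρ ^ #Kᶜ * #{z : G.Pair | G.color z.1.1 = G.color z₀.1.1 ∧
      ∀ j ∈ K, G.mixedTail S z j = G.mixedTail S z₀ j} ≤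
      2 ^ Fintype.card J * (D t * a ^ ((t : ℤ) - Fintype.card J)) := by
  obtain ⟨j, hj⟩ := hKS
  have ha0 : 0 < a := by linarith
  have hs : #(K \ S) ≤ #Sᶜ := card_le_card fun j hj ↦ mem_compl.2 (mem_sdiff.1 hj).2
  have hexp : #Sᶜ - #(K \ S) ≤ #Kᶜ := by
    have hsub : Sᶜ ⊆ Kᶜ ∪ K \ S := fun j hj ↦ by
      by_cases hjK : j ∈ K <;> simp_all
    have := (card_le_card hsub).trans (card_union_le _ _)
    omega
  have hcount : (#{z : G.Pair | G.color z.1.1 = G.color z₀.1.1 ∧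
      ∀ j ∈ K, G.mixedTail S z j = G.mixedTail S z₀ j} : ℝ) ≤ D (t + #(K \ S)) := by
    exact_mod_cast card_agreeing_le_of_mem hG hcenter hD (mem_inter.1 hj).1 (mem_inter.1 hj).2 z₀
  calc _ ≤ 2 ^ Fintype.card J * a ^ (-2 * (#Sᶜ - #(K \ S) : ℕ) : ℤ) *
        (D t * a ^ (2 * ((#Sᶜ : ℤ) - #(K \ S)) + t - Fintype.card J)) :=
        mul_le_mul ((pow_le_pow_of_le_one hρ hρ1 hexp).trans
          (pow_le_two_pow_mul_zpow ha0 hρ hρa ((Nat.sub_le _ _).trans (card_le_univ _))))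
          (hcount.trans (hgood.codegree_add_le_of_half ha hanti hodd hS hS' hs))
          (by positivity) (by positivity)
    _ = 2 ^ Fintype.card J * (D t * a ^ ((t : ℤ) - Fintype.card J)) := by
        rw [mul_mul_mul_comm, ← zpow_add₀ ha0.ne', mul_assoc]
        congr 3
        omega

variable [Fintype V]

lemma card_agreeing_le_mul_zpow (hG : G.IsMatchingColoring)
    (hcenter : ∀ θ, #(G.center θ) = t) (ht : t ≠ 0) (hD : ∀ U, #{e | U ⊆ G.edge e} ≤ D #U)
    (hgood : IsGoodScale a t (Fintype.card J) D)
    (hV : (Fintype.card V : ℝ) = a ^ (t + Fintype.card J)) {S K : Finset J}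
    (hS' : 2 * #Sᶜ ≤ Fintype.card J + 1) (hKS : Disjoint K S) (z₀ : G.Pair) :
    (#{z : G.Pair | G.color z.1.1 = G.color z₀.1.1 ∧
      ∀ j ∈ K, G.mixedTail S z j = G.mixedTail S z₀ j} : ℝ) ≤
      D t * a ^ ((t : ℤ) + Fintype.card J - 2 * #K) := by
  have hcenter_nonempty (θ : Θ) : (G.center θ).Nonempty := by
    rw [← card_pos, hcenter]
    exact ht.bot_lt
  rcases K.eq_empty_or_nonempty with rfl | hK
  · have hcount : #{z : G.Pair | G.color z.1.1 = G.color z₀.1.1 ∧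
        ∀ j ∈ (∅ : Finset J), G.mixedTail S z j = G.mixedTail S z₀ j} ≤ D t * Fintype.card V := by
      refine (card_le_card fun z hz ↦ ?_).trans
        ((card_pair_fst_mem_le hcenter hD {e | G.color e = G.color z₀.1.1}).trans
          (Nat.mul_le_mul_left _ (card_color_le hG hcenter_nonempty _)))
      simp_all
    calc _ ≤ (D t : ℝ) * Fintype.card V := by exact_mod_cast hcount
      _ = _ := by
        rw [hV, card_empty, Nat.cast_zero, mul_zero, sub_zero, ← Nat.cast_add, zpow_natCast]
  · have hKS' : #K ≤ #Sᶜ := card_le_card fun j hj ↦ mem_compl.2 (disjoint_left.1 hKS hj)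
    exact (Nat.cast_le.2 (card_agreeing_le_of_disjoint hG hcenter_nonempty hD hKS z₀)).trans
      (hgood.codegree_le #K hK.card_pos (by omega))

lemma sum_prod_agreement_le (hG : G.IsMatchingColoring)
    (hcenter : ∀ θ, #(G.center θ) = t) (ht : t ≠ 0) (hD : ∀ U, #{e | U ⊆ G.edge e} ≤ D #U)
    (hanti : Antitone D) (hgood : IsGoodScale a t (Fintype.card J) D)
    (hodd : Odd (t + Fintype.card J)) (ha : 1 ≤ a)
    (hV : (Fintype.card V : ℝ) = a ^ (t + Fintype.card J))
    (hρ : 0 ≤ ρ) (hρ1 : ρ ≤ 1) (hρa : ρ ≤ 2 * a ^ (-2 : ℤ)) {S : Finset J}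
    (hS : Fintype.card J ≤ 2 * #Sᶜ + 1) (hS' : 2 * #Sᶜ ≤ Fintype.card J + 1) (z₀ : G.Pair) :
    ∑ z : G.Pair with G.color z.1.1 = G.color z₀.1.1,
      ∏ j, ((if G.mixedTail S z j = G.mixedTail S z₀ j then (1 : ℝ) else 0) + ρ) ≤
      4 ^ Fintype.card J * (D t * a ^ ((t : ℤ) - Fintype.card J)) := by
  have ha0 : 0 < a := by linarith
  have hterm (K : Finset J) : ρ ^ #Kᶜ * #{z : G.Pair | G.color z.1.1 = G.color z₀.1.1 ∧
      ∀ j ∈ K, G.mixedTail S z j = G.mixedTail S z₀ j} ≤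
      2 ^ Fintype.card J * (D t * a ^ ((t : ℤ) - Fintype.card J)) := by
    by_cases hKS : (K ∩ S).Nonempty
    · exact pow_mul_card_agreeing_le_of_inter hG hcenter hD hanti hgood hodd ha hρ hρ1 hρa hS hS'
        hKS z₀
    · rw [not_nonempty_iff_eq_empty, ← disjoint_iff_inter_eq_empty] at hKS
      calc _ ≤ 2 ^ Fintype.card J * a ^ (-2 * #Kᶜ : ℤ) *
            (D t * a ^ ((t : ℤ) + Fintype.card J - 2 * #K)) :=
            mul_le_mul (pow_le_two_pow_mul_zpow ha0 hρ hρa (card_le_univ _))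
              (card_agreeing_le_mul_zpow hG hcenter ht hD hgood hV hS' hKS z₀)
              (by positivity) (by positivity)
        _ = 2 ^ Fintype.card J * (D t * a ^ ((t : ℤ) - Fintype.card J)) := by
            rw [mul_mul_mul_comm, ← zpow_add₀ ha0.ne', mul_assoc, card_compl,
              Nat.cast_sub (card_le_univ K)]
            congr 3
            ring
  simp_rw [sum_prod_ite_add_eq, filter_filter]
  calc _ ≤ ∑ _K : Finset J, 2 ^ Fintype.card J * (D t * a ^ ((t : ℤ) - Fintype.card J)) :=
        sum_le_sum fun K _ ↦ hterm K
    _ = 4 ^ Fintype.card J * (D t * a ^ ((t : ℤ) - Fintype.card J)) := by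
        rw [sum_const, card_univ, Fintype.card_finset, nsmul_eq_mul, ← mul_assoc, Nat.cast_pow,
          ← mul_pow]
        norm_num

end CenteredHypergraph

/-! ### The pair sum and the second moment -/

namespace CenteredHypergraph

variable {E ι Θ J V : Type*} [Fintype E] [DecidableEq E] [Fintype ι] [DecidableEq ι]
  [DecidableEq Θ] [Fintype J] [DecidableEq J] [Fintype V] [DecidableEq V]
  {G : CenteredHypergraph E ι Θ J V} {t : ℕ} {D : ℕ → ℕ} {a : ℝ}

lemma expect_sum_pair_le_of_kikuchi {P : Type*} [Fintype P] [DecidableEq P] [Nonempty P]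
    [Nonempty V] (hG : G.IsMatchingColoring) (hcenter : ∀ θ, #(G.center θ) = t) (ht : t ≠ 0)
    (hD : ∀ U, #{e | U ⊆ G.edge e} ≤ D #U) (hDt : 0 < D t) (hanti : Antitone D)
    (hgood : IsGoodScale a t (Fintype.card J) D) (hodd : Odd (t + Fintype.card J)) (ha : 1 ≤ a)
    (hV : (Fintype.card V : ℝ) = a ^ (t + Fintype.card J))
    (hPV : (Fintype.card P : ℝ) / Fintype.card V ≤ 1)
    (hPV' : (Fintype.card P : ℝ) / Fintype.card V ≤ 2 * a ^ (-2 : ℤ)) {L : ℝ} (hL : 1 ≤ L)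
    (hwords : 2 * (Fintype.card (J → P → V) : ℝ) ≤ Real.exp L) (y : (ι → ℤˣ) → V → ℤˣ) :
    𝔼 b : ι → ℤˣ, ∑ z : G.Pair, (b (G.color z.1.1) : ℝ) * b (G.color z.1.2) *
      ∏ j, (y b (G.tail z.1.1 j) : ℝ) * y b (G.tail z.1.2 j) ≤
      64 * Real.exp 1 * √(2 * L * (Fintype.card G.Pair *
        (4 ^ Fintype.card J * (D t * a ^ ((t : ℤ) - Fintype.card J))) *
        (Fintype.card V / Fintype.card P) ^ Fintype.card J)) := by
  obtain ⟨S, -, hS⟩ := exists_subset_card_eq (s := (univ : Finset J))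
    (n := Fintype.card J / 2) (by rw [card_univ]; omega)
  have hSc : #Sᶜ = Fintype.card J - Fintype.card J / 2 := by rw [card_compl, hS]
  have hcolor (z : G.Pair) : G.color z.1.1 ≠ G.color z.1.2 := fun h ↦
    z.2.2 (hG.eq_of_cls_eq (card_pos.1 ((hcenter _).symm ▸ ht.bot_lt)) h z.2.1)
  have hswap (x : V → ℤˣ) (z : G.Pair) : ∏ j, (x (G.tail z.1.1 j) : ℝ) * x (G.tail z.1.2 j) =
      ∏ j, (x (G.mixedTail S z j) : ℝ) * x (G.mixedTail Sᶜ z j) := by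
    refine prod_congr rfl fun j _ ↦ ?_
    by_cases hj : j ∈ S <;> simp [mixedTail, hj, mul_comm]
  have hagree {S' : Finset J} := sum_prod_agreement_le (S := S') hG hcenter ht hD hanti hgood hodd
    ha hV (by positivity) hPV hPV'
  have hκ : 0 < 4 ^ Fintype.card J * (D t * a ^ ((t : ℤ) - Fintype.card J)) := by positivity
  have hlift (δ : G.Pair → ℝ) (hδ : ∀ z, |δ z| ≤ 1) (x : (ι → ℤˣ) → V → ℤˣ) :=
    expect_sum_prod_le_of_kikuchi (fun z ↦ G.color z.1.1) (G.mixedTail S) (G.mixedTail Sᶜ) hκ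
      (fun z₀ ↦ hagree (by omega) (by omega) z₀)
      (fun z₀ ↦ hagree (by rw [compl_compl]; omega) (by rw [compl_compl]; omega) z₀) hδ x hL hwords
  simp_rw [← hswap] at hlift
  refine (expect_sum_mul_le_four_mul hcolor (G := fun (x : V → ℤˣ) (z : G.Pair) ↦
    ∏ j, (x (G.tail z.1.1 j) : ℝ) * x (G.tail z.1.2 j)) hlift y).trans_eq ?_
  rw [← mul_assoc, ← mul_assoc]
  norm_num

end CenteredHypergraph

lemma exists_nat_between_pow {a : ℝ} (ha : 1 ≤ a) {q n : ℕ} (hn : (n : ℝ) = a ^ q) :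
    ∃ m : ℕ, 0 < m ∧ m ≤ n ∧ a ^ (q - 2) ≤ m ∧ (m : ℝ) ≤ 2 * a ^ (q - 2) := by
  have hpow : 1 ≤ a ^ (q - 2) := one_le_pow₀ ha
  refine ⟨⌈a ^ (q - 2)⌉₊, Nat.ceil_pos.2 (by linarith), Nat.ceil_le.2 ?_, Nat.le_ceil _, ?_⟩
  · rw [hn]
    exact pow_le_pow_right₀ ha (Nat.sub_le _ _)
  · linarith [Nat.ceil_lt_add_one (zero_le_one.trans hpow)]

lemma two_mul_card_words_le_exp {n m r : ℕ} (hn : 2 ≤ n) (hm : 0 < m) :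
    2 * ((n : ℝ) ^ m) ^ r ≤ Real.exp (2 * (r + 1) * (m * Real.log n)) := by
  have hn0 : (0 : ℝ) < n := by positivity
  have hlog : 0 ≤ Real.log n := Real.log_natCast_nonneg n
  have hm1 : (1 : ℝ) ≤ m := by exact_mod_cast hm
  calc 2 * ((n : ℝ) ^ m) ^ r ≤ n * ((n : ℝ) ^ m) ^ r := by
        gcongr
        exact_mod_cast hn
    _ = Real.exp ((m * r + 1) * Real.log n) := by
        rw [← pow_mul, ← pow_succ', ← Real.rpow_natCast, Real.rpow_def_of_pos hn0]
        push_cast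
        ring_nf
    _ ≤ Real.exp (2 * (r + 1) * (m * Real.log n)) := by
        refine Real.exp_le_exp.2 ?_
        nlinarith [mul_nonneg (sub_nonneg.2 hm1) hlog, mul_nonneg (Nat.cast_nonneg (α := ℝ) r)
          (mul_nonneg (Nat.cast_nonneg (α := ℝ) m) hlog)]

lemma sqrt_kikuchi_parameters_le {a d k ℓ m n z : ℝ} {t r : ℕ} (ha : 0 < a)
    (hn : n = a ^ (t + r)) (hℓ : 1 / 2 ≤ ℓ) (hd : 0 ≤ d) (hm : 0 < m)
    (hma : m ≤ 2 * a ^ (t + r - 2)) (hnm : n / m ≤ a ^ 2) (hk : 0 ≤ k) (hz0 : 0 ≤ z)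
    (hz : z ≤ d * (k * n)) :
    √(2 * (2 * (r + 1) * (m * ℓ)) *
      (z * (4 ^ r * (d * a ^ ((t : ℤ) - r))) * (n / m) ^ r)) ≤
      √(16 * (r + 1) * 4 ^ r) * (d * n * √(k * a ^ (t + r - 2)) * ℓ) := by
  have hn0 : 0 < n := hn ▸ pow_pos ha _
  have hcancel : a ^ ((t : ℤ) - r) * (a ^ 2) ^ r = n := by
    rw [hn, ← pow_mul, ← zpow_natCast, ← zpow_natCast, ← zpow_add₀ ha.ne']
    congr 1
    push_cast
    ring
  have hbound : 2 * (2 * (r + 1) * (m * ℓ)) *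
      (z * (4 ^ r * (d * a ^ ((t : ℤ) - r))) * (n / m) ^ r) ≤
      16 * (r + 1) * 4 ^ r * ((d * n * ℓ) ^ 2 * (k * a ^ (t + r - 2))) := by
    calc _ ≤ 2 * (2 * (r + 1) * (2 * a ^ (t + r - 2) * ℓ)) *
          (d * (k * n) * (4 ^ r * (d * a ^ ((t : ℤ) - r))) * (a ^ 2) ^ r) := by gcongr
      _ = 8 * (r + 1) * 4 ^ r * (d ^ 2 * k * n * a ^ (t + r - 2)) *
          (a ^ ((t : ℤ) - r) * (a ^ 2) ^ r) * ℓ := by ring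
      _ ≤ 8 * (r + 1) * 4 ^ r * (d ^ 2 * k * n * a ^ (t + r - 2)) * n * (2 * ℓ ^ 2) := by
          rw [hcancel]
          gcongr
          nlinarith
      _ = _ := by ring
  refine (Real.sqrt_le_sqrt hbound).trans_eq ?_
  rw [Real.sqrt_mul (by positivity), Real.sqrt_mul (sq_nonneg _), Real.sqrt_sq (by positivity)]
  ring

namespace CenteredHypergraph

variable {E ι Θ J V : Type*} [Fintype E] [DecidableEq E] [Fintype ι]
  [DecidableEq Θ] [Fintype J] [Fintype V] [DecidableEq V]
  {G : CenteredHypergraph E ι Θ J V} {t : ℕ} {D : ℕ → ℕ} {a : ℝ}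

lemma card_pair_le (hG : G.IsMatchingColoring) (hcenter : ∀ θ, #(G.center θ) = t) (ht : t ≠ 0)
    (hD : ∀ U, #{e | U ⊆ G.edge e} ≤ D #U) :
    Fintype.card G.Pair ≤ D t * (Fintype.card ι * Fintype.card V) := by
  classical
  have hE : Fintype.card E ≤ Fintype.card V * Fintype.card ι := by
    refine card_le_mul_card_image_of_maps_to (fun e _ ↦ mem_univ (G.color e)) _ fun i _ ↦
      card_color_le hG (fun θ ↦ ?_) i
    rw [← card_pos, hcenter]
    exact ht.bot_lt
  have hpair := card_pair_fst_mem_le hcenter hD univ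
  simp only [mem_univ, filter_true, card_univ] at hpair
  exact hpair.trans (Nat.mul_le_mul_left _ (mul_comm (Fintype.card V) _ ▸ hE))

variable [DecidableEq ι]

lemma expect_sum_pair_le (hG : G.IsMatchingColoring) (hcenter : ∀ θ, #(G.center θ) = t)
    (ht : t ≠ 0) (hD : ∀ U, #{e | U ⊆ G.edge e} ≤ D #U) (hDt : 0 < D t) (hanti : Antitone D)
    (hgood : IsGoodScale a t (Fintype.card J) D) (hodd : Odd (t + Fintype.card J))
    (htJ : 2 ≤ t + Fintype.card J) (ha : 1 ≤ a) (hV2 : 2 ≤ Fintype.card V)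
    (hV : (Fintype.card V : ℝ) = a ^ (t + Fintype.card J)) (y : (ι → ℤˣ) → V → ℤˣ) :
    𝔼 b : ι → ℤˣ, ∑ z : G.Pair, (b (G.color z.1.1) : ℝ) * b (G.color z.1.2) *
      ∏ j, (y b (G.tail z.1.1 j) : ℝ) * y b (G.tail z.1.2 j) ≤
      64 * Real.exp 1 * √(16 * (Fintype.card J + 1) * 4 ^ Fintype.card J) *
        (D t * Fintype.card V * √(Fintype.card ι * a ^ (t + Fintype.card J - 2)) *
          Real.log (Fintype.card V)) := by
  classical
  obtain ⟨m, hm, hmn, ham, hma⟩ := exists_nat_between_pow ha hV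
  have : Nonempty V := Fintype.card_pos_iff.1 (by omega)
  have : NeZero m := ⟨hm.ne'⟩
  have hn0 : (0 : ℝ) < Fintype.card V := by positivity
  have hm1 : (1 : ℝ) ≤ m := by exact_mod_cast hm
  have hsplit : (Fintype.card V : ℝ) = a ^ (t + Fintype.card J - 2) * a ^ 2 := by
    rw [hV, ← pow_add, Nat.sub_add_cancel htJ]
  have hlog : 1 / 2 ≤ Real.log (Fintype.card V) := by
    have := Real.log_le_log two_pos (by exact_mod_cast hV2 : (2 : ℝ) ≤ Fintype.card V)
    linarith [Real.log_two_gt_d9]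
  have hmn_div : (m : ℝ) / Fintype.card V ≤ 2 * a ^ (-2 : ℤ) := by
    rw [div_le_iff₀ hn0, hsplit]
    refine hma.trans_eq ?_
    field_simp
  have hnm_div : (Fintype.card V : ℝ) / m ≤ a ^ 2 := by
    rw [div_le_iff₀ (by positivity), hsplit, mul_comm]
    gcongr
  have hpairs : (Fintype.card G.Pair : ℝ) ≤ D t * (Fintype.card ι * Fintype.card V) := by
    exact_mod_cast card_pair_le hG hcenter ht hD
  have hL : 1 ≤ 2 * (Fintype.card J + 1) * (m * Real.log (Fintype.card V)) := by
    nlinarith [mul_le_mul hm1 hlog (by norm_num) (by positivity), Nat.cast_nonneg (α := ℝ)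
      (Fintype.card J)]
  refine (expect_sum_pair_le_of_kikuchi (P := Fin m) hG hcenter ht hD hDt hanti hgood hodd ha hV
    (by rw [Fintype.card_fin]; exact div_le_one_of_le₀ (by exact_mod_cast hmn) hn0.le)
    (by rwa [Fintype.card_fin]) hL (by simpa using two_mul_card_words_le_exp hV2 hm) y).trans ?_
  rw [Fintype.card_fin, mul_assoc (64 * Real.exp 1)]
  gcongr
  exact sqrt_kikuchi_parameters_le (by positivity) hV hlog (by positivity) (by positivity)
    hma hnm_div (by positivity) (by positivity) hpairs

end CenteredHypergraph

lemma sq_sum_mul_le_sum_pair {E Θ : Type*} [Fintype E] [DecidableEq E] [Fintype Θ] [DecidableEq Θ]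
    (cls : E → Θ) (w : Θ → ℝ) (g : E → ℝ) :
    (∑ e, w (cls e) * g e) ^ 2 ≤ (∑ θ, w θ ^ 2) * (∑ e, g e ^ 2 +
      ∑ z : {z : E × E // cls z.1 = cls z.2 ∧ z.1 ≠ z.2}, g z.1.1 * g z.1.2) := by
  set S : Θ → ℝ := fun θ ↦ ∑ e with cls e = θ, g e with hS
  have hfiber (f : Θ → ℝ) : ∑ e, f (cls e) * g e = ∑ θ, f θ * S θ := by
    simp_rw [hS, mul_sum, sum_filter]
    rw [sum_comm]
    simp
  have hpairs : ∑ θ, S θ ^ 2 = ∑ e, g e ^ 2 +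
      ∑ z : {z : E × E // cls z.1 = cls z.2 ∧ z.1 ≠ z.2}, g z.1.1 * g z.1.2 := by
    simp_rw [sq, ← hfiber, hS, sum_mul]
    rw [← sum_subtype (univ.filter fun z : E × E ↦ cls z.1 = cls z.2 ∧ z.1 ≠ z.2) (by simp)
      fun z ↦ g z.1 * g z.2, sum_filter, Fintype.sum_prod_type, ← sum_add_distrib]
    refine sum_congr rfl fun e _ ↦ ?_
    rw [← sum_filter, ← add_sum_erase (a := e) _ _ (by simp)]
    congr 2
    · grind
    · exact funext fun _ ↦ mul_comm _ _
  rw [hfiber, ← hpairs]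
  exact sum_mul_sq_le_sq_mul_sq _ _ _

namespace CenteredHypergraph

variable {E ι Θ J V : Type*} [Fintype E] [DecidableEq V] [Fintype J]
  {G : CenteredHypergraph E ι Θ J V} {t : ℕ} {D : ℕ → ℕ} {a : ℝ}

lemma sq_sum_edge_le [DecidableEq E] [Fintype Θ] [DecidableEq Θ] (b : ι → ℤˣ) (x : V → ℤˣ) :
    (∑ e, (b (G.color e) : ℝ) * ∏ u ∈ G.edge e, (x u : ℝ)) ^ 2 ≤ Fintype.card Θ *
      (Fintype.card E + ∑ z : G.Pair, (b (G.color z.1.1) : ℝ) * b (G.color z.1.2) *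
        ∏ j, (x (G.tail z.1.1 j) : ℝ) * x (G.tail z.1.2 j)) := by
  have hsign (u : ℤˣ) : (u : ℝ) ^ 2 = 1 := by rw [sq, intUnit_mul_self]
  have hcs := sq_sum_mul_le_sum_pair G.cls (fun θ ↦ ∏ u ∈ G.center θ, (x u : ℝ))
    fun e ↦ (b (G.color e) : ℝ) * ∏ j, (x (G.tail e j) : ℝ)
  simp_rw [mul_pow, ← prod_pow, hsign] at hcs
  have hmonomial (e : E) : (b (G.color e) : ℝ) * ∏ u ∈ G.edge e, (x u : ℝ) =
      (∏ u ∈ G.center (G.cls e), (x u : ℝ)) * (b (G.color e) * ∏ j, (x (G.tail e j) : ℝ)) := by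
    rw [prod_edge, mul_left_comm]
  have hpair (z : G.Pair) : (b (G.color z.1.1) : ℝ) * b (G.color z.1.2) *
      ∏ j, (x (G.tail z.1.1 j) : ℝ) * x (G.tail z.1.2 j) =
      b (G.color z.1.1) * (∏ j, (x (G.tail z.1.1 j) : ℝ)) *
        (b (G.color z.1.2) * ∏ j, (x (G.tail z.1.2 j) : ℝ)) := by
    rw [prod_mul_distrib, mul_mul_mul_comm]
  simp_rw [hmonomial, hpair]
  simpa using hcs

lemma expect_sq_sum_edge_le [Fintype Θ] [Fintype ι] [DecidableEq ι] [Fintype V]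
    (hG : G.IsMatchingColoring) (hcenter : ∀ θ, #(G.center θ) = t) (ht : t ≠ 0)
    (hD : ∀ U, #{e | U ⊆ G.edge e} ≤ D #U) (hanti : Antitone D)
    (hgood : IsGoodScale a t (Fintype.card J) D) (hodd : Odd (t + Fintype.card J))
    (htJ : 2 ≤ t + Fintype.card J) (ha : 1 ≤ a) (hV2 : 2 ≤ Fintype.card V)
    (hV : (Fintype.card V : ℝ) = a ^ (t + Fintype.card J))
    (hclasses : (Fintype.card Θ : ℝ) * D t ≤ 2 * Fintype.card E) (y : (ι → ℤˣ) → V → ℤˣ) :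
    𝔼 b : ι → ℤˣ, (∑ e, (b (G.color e) : ℝ) * ∏ u ∈ G.edge e, (y b u : ℝ)) ^ 2 ≤
      2 * Fintype.card E ^ 2 / D t +
        128 * Real.exp 1 * √(16 * (Fintype.card J + 1) * 4 ^ Fintype.card J) * Fintype.card E *
          Fintype.card V * √(Fintype.card ι * a ^ (t + Fintype.card J - 2)) *
            Real.log (Fintype.card V) := by
  classical
  rcases isEmpty_or_nonempty E with hE | ⟨⟨e₀⟩⟩
  · simp
  have hDt : 0 < D t := by
    refine (card_pos.2 ⟨e₀, ?_⟩).trans_le (card_class_le hcenter hD (G.cls e₀))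
    exact (mem_filter_univ e₀).2 rfl
  have : (0 : ℝ) < D t := Nat.cast_pos.2 hDt
  have hpairs := expect_sum_pair_le hG hcenter ht hD hDt hanti hgood hodd htJ ha hV2 hV y
  set B := 64 * Real.exp 1 * √(16 * (Fintype.card J + 1) * 4 ^ Fintype.card J) with hB
  set R := Fintype.card V * √(Fintype.card ι * a ^ (t + Fintype.card J - 2)) *
    Real.log (Fintype.card V) with hR
  calc _ ≤ 𝔼 b : ι → ℤˣ, Fintype.card Θ * (Fintype.card E + ∑ z : G.Pair,
          (b (G.color z.1.1) : ℝ) * b (G.color z.1.2) *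
            ∏ j, (y b (G.tail z.1.1 j) : ℝ) * y b (G.tail z.1.2 j)) :=
        expect_le_expect fun b _ ↦ sq_sum_edge_le b (y b)
    _ ≤ Fintype.card Θ * (Fintype.card E + B * (D t * R)) := by
        rw [← mul_expect, expect_add_distrib, Fintype.expect_const]
        gcongr
        exact hpairs.trans_eq (by ring)
    _ = Fintype.card Θ * D t * (Fintype.card E / D t + B * R) := by
        field_simp
    _ ≤ 2 * Fintype.card E * (Fintype.card E / D t + B * R) := by
        gcongr
    _ = _ := by
        rw [hB, hR]
        ring

end CenteredHypergraph

/-! ### Unions of uniform matchings -/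

namespace CenteredHypergraph

variable {E ι Θ V : Type*} [LinearOrder V] {r : ℕ}

/-- The centered hypergraph with prescribed hyperedges `A`; each tail is enumerated
increasingly. -/
def ofEdges (color : E → ι) (cls : E → Θ) (center : Θ → Finset V) (A : E → Finset V)
    (hA : ∀ e, #(A e \ center (cls e)) = r) : CenteredHypergraph E ι Θ (Fin r) V where
  color := color
  cls := cls
  center := center
  tail e := (A e \ center (cls e)).orderEmbOfFin (hA e)
  tail_injective e := (orderEmbOfFin _ (hA e)).injective
  tail_notMem_center e j := (mem_sdiff.1 (orderEmbOfFin_mem _ (hA e) j)).2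

lemma edge_ofEdges {color : E → ι} {cls : E → Θ} {center : Θ → Finset V} {A : E → Finset V}
    {hA : ∀ e, #(A e \ center (cls e)) = r} {e : E} (he : center (cls e) ⊆ A e) :
    (ofEdges color cls center A hA).edge e = A e := by
  have htail : univ.image ((A e \ center (cls e)).orderEmbOfFin (hA e)) = A e \ center (cls e) := by
    exact image_orderEmbOfFin_univ _ (hA e)
  rw [edge]
  exact (congrArg _ htail).trans (union_sdiff_of_subset he)

end CenteredHypergraph

section Codegree

variable {n : ℕ}

lemma mMaxCodeg_antitone (H : Multiset (Finset (Fin n))) : Antitone (mMaxCodeg H) := by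
  intro s r hsr
  refine Finset.sup_le fun Q hQ ↦ ?_
  obtain ⟨Q', hQQ', hQ'⟩ := exists_subset_card_eq (hsr.trans_eq ((mem_filter_univ Q).1 hQ).symm)
  refine le_trans ?_ (le_sup ((mem_filter_univ Q').2 hQ'))
  exact Multiset.card_le_card (Multiset.monotone_filter_right H fun C hC ↦ hQQ'.trans hC)

lemma mCodeg_le_mMaxCodeg (H : Multiset (Finset (Fin n))) (U : Finset (Fin n)) :
    mCodeg H U ≤ mMaxCodeg H #U :=
  le_sup (f := mCodeg H) ((mem_filter_univ U).2 rfl)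

lemma mCodeg_sum_val {ι : Type*} [Fintype ι] (H : ι → Finset (Finset (Fin n)))
    (U : Finset (Fin n)) :
    mCodeg (∑ i, (H i).val) U = #{e : Σ i, H i | U ⊆ e.2.1} := by
  have hsum : mCodeg (∑ i, (H i).val) U = ∑ i, #{C ∈ H i | U ⊆ C} := by
    simp_rw [mCodeg, ← Multiset.countP_eq_card_filter, ← Multiset.coe_countPAddMonoidHom, map_sum]
    simp [Multiset.countP_eq_card_filter, card_def]
  rw [hsum, card_filter, Fintype.sum_sigma]
  refine sum_congr rfl fun i _ ↦ ?_
  rw [card_filter]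
  exact (sum_coe_sort (H i) fun C ↦ if U ⊆ C then 1 else 0).symm

end Codegree

/-- A weakening of `mASR`: the hyperedges are covered by at most `2 |H| / d_{H,t}` sets of size
`t`, and the co-degrees satisfy the good-index conditions (1) and (2). -/
structure IsCoverRegular {n : ℕ} (q t : ℕ) (H : Multiset (Finset (Fin n))) : Prop where
  exists_cover : ∃ (p : ℕ) (Q : Fin p → Finset (Fin n)), (∀ θ, #(Q θ) = t) ∧
    (∀ C ∈ H, ∃ θ, Q θ ⊆ C) ∧ (p : ℝ) * mMaxCodeg H t ≤ 2 * H.card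
  isGoodScale : IsGoodScale ((n : ℝ) ^ (q : ℝ)⁻¹) t (q - t) (mMaxCodeg H)

lemma GoodIndex.isGoodScale {n q t : ℕ} {d : ℕ → ℕ} (h : GoodIndex n q (fun r ↦ (d r : ℝ)) t)
    (hq : q ≠ 0) (htq : t ≤ q) (hdt : 0 < d t) :
    IsGoodScale ((n : ℝ) ^ (q : ℝ)⁻¹) t (q - t) d := by
  have hdt' : (0 : ℝ) < d t := Nat.cast_pos.2 hdt
  obtain ⟨h₁, h₂, -⟩ := h
  refine ⟨fun s hs hsr ↦ ?_, fun s hsr ↦ ?_⟩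
  · rw [← Real.rpow_mul_intCast (Nat.cast_nonneg n), ← div_le_iff₀' hdt']
    refine (h₁ s hs (by omega)).trans_eq ?_
    congr 1
    push_cast [htq]
    field_simp
    ring
  · rw [← Real.rpow_mul_intCast (Nat.cast_nonneg n), ← div_le_iff₀' hdt']
    refine (h₂ (t + s) (by omega) (by omega)).trans_eq ?_
    congr 1
    push_cast
    field_simp
    ring

lemma mASR.isCoverRegular {n q t : ℕ} {H : Multiset (Finset (Fin n))} (h : mASR q t H)
    (hq : q ≠ 0) (htq : t ≤ q) : IsCoverRegular q t H := by
  obtain ⟨p, Hs, Q, rfl, hQ, hsize, hgood⟩ := h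
  refine ⟨⟨p, Q, fun θ ↦ (hQ θ).1, fun C hC ↦ ?_, ?_⟩, ?_⟩
  · obtain ⟨θ, -, hθ⟩ := Multiset.mem_sum.1 hC
    exact ⟨θ, (hQ θ).2 C hθ⟩
  · have hsum := sum_le_sum fun θ (_ : θ ∈ univ) ↦ (hsize θ).1
    rw [sum_const, card_univ, Fintype.card_fin, nsmul_eq_mul, ← Nat.cast_sum,
      ← Multiset.card_sum] at hsum
    linarith
  · rcases (mMaxCodeg (∑ θ, Hs θ) t).eq_zero_or_pos with hzero | hpos
    · have hempty : ∑ θ, Hs θ = 0 := sum_eq_zero fun θ _ ↦ by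
        simpa [hzero] using (hsize θ).2
      have hcodeg (r : ℕ) : mMaxCodeg (0 : Multiset (Finset (Fin n))) r = 0 := by
        simp [mMaxCodeg, mCodeg]
      rw [hempty]
      constructor <;> simp [hcodeg]
    · exact hgood.isGoodScale hq htq hpos

lemma sum_mul_sum_eq_sum_sigma {ι α R : Type*} [Fintype ι] [NonUnitalNonAssocSemiring R] (b : ι → R)
    (H : ι → Finset α) (f : α → R) :
    ∑ i, b i * ∑ A ∈ H i, f A = ∑ e : Σ i, H i, b e.1 * f e.2.1 := by
  rw [Fintype.sum_sigma]
  refine sum_congr rfl fun i _ ↦ ?_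
  rw [mul_sum]
  exact (sum_coe_sort (H i) fun A ↦ b i * f A).symm

lemma IsCoverRegular.exists_centeredHypergraph {n k q t : ℕ} {H : Fin k → Finset (Finset (Fin n))}
    (h : IsCoverRegular q t (∑ i, (H i).val)) (huniform : ∀ i, ∀ A ∈ H i, #A = q) :
    ∃ (p : ℕ) (G : CenteredHypergraph (Σ i, H i) (Fin k) (Fin p) (Fin (q - t)) (Fin n)),
      (∀ e, G.color e = e.1) ∧ (∀ e, G.edge e = e.2.1) ∧ (∀ θ, #(G.center θ) = t) ∧
      (p : ℝ) * mMaxCodeg (∑ i, (H i).val) t ≤ 2 * Fintype.card (Σ i, H i) := by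
  obtain ⟨p, Q, hQ, hcover, hp⟩ := h.exists_cover
  have hmem (e : Σ i, H i) : e.2.1 ∈ ∑ i, (H i).val :=
    Multiset.mem_sum.2 ⟨e.1, mem_univ _, e.2.2⟩
  choose cls hcls using fun e : Σ i, H i ↦ hcover _ (hmem e)
  have hsdiff (e : Σ i, H i) : #(e.2.1 \ Q (cls e)) = q - t := by
    rw [card_sdiff_of_subset (hcls e), huniform _ _ e.2.2, hQ]
  refine ⟨p, .ofEdges (fun e ↦ e.1) cls Q (fun e ↦ e.2.1) hsdiff, fun _ ↦ rfl,
    fun e ↦ CenteredHypergraph.edge_ofEdges (hcls e), hQ, hp.trans_eq ?_⟩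
  simp

lemma isMatchingColoring_of_matchings {n k : ℕ} {H : Fin k → Finset (Finset (Fin n))}
    {Θ J : Type*} [Fintype J] {G : CenteredHypergraph (Σ i, H i) (Fin k) Θ J (Fin n)}
    (hmatching : ∀ i, ∀ A ∈ H i, ∀ A' ∈ H i, A ≠ A' → Disjoint A A')
    (hcolor : ∀ e, G.color e = e.1) (hedge : ∀ e, G.edge e = e.2.1) : G.IsMatchingColoring := by
  rintro ⟨i, A, hA⟩ ⟨i', A', hA'⟩ hii' hAA'
  simp only [hcolor, hedge] at hii' hAA'
  subst hii'
  obtain rfl := of_not_not fun hne ↦ hAA' (hmatching i A hA A' hA' hne)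
  rfl

lemma expect_sq_sum_matchings_le {n k q t : ℕ} {H : Fin k → Finset (Finset (Fin n))}
    (hodd : Odd q) (hq : 3 ≤ q) (hn : 2 ≤ n) (ht : 1 ≤ t) (htq : t ≤ q)
    (huniform : ∀ i, ∀ A ∈ H i, #A = q)
    (hmatching : ∀ i, ∀ A ∈ H i, ∀ A' ∈ H i, A ≠ A' → Disjoint A A')
    (hreg : IsCoverRegular q t (∑ i, (H i).val)) (y : (Fin k → ℤˣ) → Fin n → ℤˣ) :
    𝔼 b : Fin k → ℤˣ, (∑ i, (b i : ℝ) * ∑ A ∈ H i, ∏ u ∈ A, (y b u : ℝ)) ^ 2 ≤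
      2 * ((∑ i, #(H i) : ℕ) : ℝ) ^ 2 / mMaxCodeg (∑ i, (H i).val) t +
        128 * Real.exp 1 * √(16 * ((q - t : ℕ) + 1) * 4 ^ (q - t)) * (∑ i, #(H i) : ℕ) * n *
          √(k * (n : ℝ) ^ ((1 : ℝ) - 2 / q)) * Real.log n := by
  obtain ⟨p, G, hcolor, hedge, hcenter, hp⟩ := hreg.exists_centeredHypergraph huniform
  have hD (U : Finset (Fin n)) : #{e | U ⊆ G.edge e} ≤ mMaxCodeg (∑ i, (H i).val) #U := by
    simp_rw [hedge, ← mCodeg_sum_val]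
    exact mCodeg_le_mMaxCodeg _ U
  have hcard : Fintype.card (Σ i, H i) = ∑ i, #(H i) := by simp
  have hqt : t + Fintype.card (Fin (q - t)) = q := by
    rw [Fintype.card_fin, Nat.add_sub_cancel' htq]
  have hroot : (n : ℝ) = ((n : ℝ) ^ (q : ℝ)⁻¹) ^ q :=
    (Real.rpow_inv_natCast_pow n.cast_nonneg (by omega)).symm
  have hroot' : (n : ℝ) ^ ((1 : ℝ) - 2 / q) = ((n : ℝ) ^ (q : ℝ)⁻¹) ^ (q - 2) := by
    rw [← Real.rpow_mul_natCast n.cast_nonneg, Nat.cast_sub (by omega)]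
    congr 1
    field_simp
    norm_num
  have hmain := CenteredHypergraph.expect_sq_sum_edge_le (a := (n : ℝ) ^ (q : ℝ)⁻¹)
    (isMatchingColoring_of_matchings hmatching hcolor hedge) hcenter (by omega) hD
    (mMaxCodeg_antitone _) (by simpa using hreg.isGoodScale) (by rwa [hqt]) (by omega)
    (Real.one_le_rpow (by exact_mod_cast one_le_two.trans hn) (by positivity)) (by simpa using hn)
    (by rwa [hqt, Fintype.card_fin]) (by rwa [Fintype.card_fin]) y
  simp_rw [hqt, hcard, hcolor, hedge, Fintype.card_fin, ← hroot'] at hmain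
  simp_rw [sum_mul_sum_eq_sum_sigma]
  exact hmain

theorem stmt11_general :
    ∀ q : ℕ, Odd q → 3 ≤ q →
    ∃ C : ℝ, 0 < C ∧
      ∀ (n k t : ℕ) (H : Fin k → Finset (Finset (Fin n))), 2 ≤ n →
        1 ≤ t → t ≤ q →
        (∀ i, ∀ A ∈ H i, A.card = q) →
        (∀ i, ∀ A ∈ H i, ∀ A' ∈ H i, A ≠ A' → Disjoint A A') →
        IsCoverRegular q t (∑ i, (H i).val) →
        (2 ^ k : ℝ)⁻¹ * ∑ b : Fin k → ℤˣ,
            (⨆ x : Fin n → ℤˣ,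
              ∑ i, ((b i : ℤ) : ℝ) * ∑ A ∈ H i, ∏ u ∈ A, ((x u : ℤ) : ℝ)) ^ 2
          ≤ 2 * (((∑ i, (H i).card : ℕ) : ℝ)) ^ 2 / (mMaxCodeg (∑ i, (H i).val) t : ℝ)
            + C * ((∑ i, (H i).card : ℕ) : ℝ) * (n : ℝ) *
              Real.sqrt ((k : ℝ) * (n : ℝ) ^ ((1 : ℝ) - 2 / (q : ℝ))) * Real.log n := by
  refine fun q hodd hq ↦ ⟨128 * Real.exp 1 * √(16 * (q + 1) * 4 ^ q), by positivity, ?_⟩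
  intro n k t H hn ht htq huniform hmatching hreg
  have hmax (b : Fin k → ℤˣ) := exists_eq_ciSup_of_finite (f := fun x : Fin n → ℤˣ ↦
    ∑ i, (b i : ℝ) * ∑ A ∈ H i, ∏ u ∈ A, (x u : ℝ))
  choose y hy using hmax
  have hexpect (f : (Fin k → ℤˣ) → ℝ) : (2 ^ k : ℝ)⁻¹ * ∑ b, f b = 𝔼 b, f b := by
    rw [Fintype.expect_eq_sum_div_card, div_eq_inv_mul]
    simp
  simp_rw [hexpect, ← hy]
  refine (expect_sq_sum_matchings_le hodd hq hn ht htq huniform hmatching hreg y).trans ?_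
  gcongr
  · exact Nat.sub_le q t
  · norm_num
  · exact Nat.sub_le q t

/-- Refuting regular q-XOR. For every odd `q ≥ 3` there is `C > 0`
depending only on `q` such that for all `n ≥ 2`: if `H 1, …, H k` are `q`-uniform
matchings on `[n]` whose disjoint union `H` is `t`-approximately strongly regular
with co-degree values `d r := d_{H,r}`, and `k ≥ d 1 ≥ n^{1−2/q}·log n`, then
`E_b[val(Ψ_b)²] ≤ 2|H|²/d t + C·|H|·n·√(k·n^{1−2/q})·log n`, where `b` is uniform
on `{±1}^k`, `Ψ_b(x) = Σ_i b i Σ_{C ∈ H i} ∏_{u∈C} x u` and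
`val(Ψ_b) = max_{x ∈ {±1}^n} Ψ_b(x)`. -/
theorem stmt11 :
    ∀ q : ℕ, Odd q → 3 ≤ q →
    ∃ C : ℝ, 0 < C ∧
      ∀ (n k t : ℕ) (H : Fin k → Finset (Finset (Fin n))), 2 ≤ n →
        1 ≤ t → t ≤ q →
        (∀ i, ∀ A ∈ H i, A.card = q) →
        (∀ i, ∀ A ∈ H i, ∀ A' ∈ H i, A ≠ A' → Disjoint A A') →
        mASR q t (∑ i, (H i).val) →
        mMaxCodeg (∑ i, (H i).val) 1 ≤ k →
        (n : ℝ) ^ ((1 : ℝ) - 2 / (q : ℝ)) * Real.log n ≤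
          (mMaxCodeg (∑ i, (H i).val) 1 : ℝ) →
        (2 ^ k : ℝ)⁻¹ * ∑ b : Fin k → ℤˣ,
            (⨆ x : Fin n → ℤˣ,
              ∑ i, ((b i : ℤ) : ℝ) * ∑ A ∈ H i, ∏ u ∈ A, ((x u : ℤ) : ℝ)) ^ 2
          ≤ 2 * (((∑ i, (H i).card : ℕ) : ℝ)) ^ 2 / (mMaxCodeg (∑ i, (H i).val) t : ℝ)
            + C * ((∑ i, (H i).card : ℕ) : ℝ) * (n : ℝ) *
              Real.sqrt ((k : ℝ) * (n : ℝ) ^ ((1 : ℝ) - 2 / (q : ℝ))) * Real.log n := by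
  intro q hodd hq
  obtain ⟨C, hC, h⟩ := stmt11_general q hodd hq
  exact ⟨C, hC, fun n k t H hn ht htq huniform hmatching hreg _ _ ↦
    h n k t H hn ht htq huniform hmatching (hreg.isCoverRegular (by omega) htq)⟩
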